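/- arXiv:1606.01024 — 2 statements merged into one kernel-verified Lean document; each statement's English description precedes it below -/
import Mathlib

section
/- Let Ω ⊆ ℝ^N be open, 1 ≤ p < ∞, ρ a p-admissible weight, and T the weighted composition C₀-semigroup on L^p_ρ(Ω) given by (T(t)f)(x) = h_t(x) f(φ(t,x)). Then T is stable on L^p_ρ(Ω) if and only if (1) sup_{t≥0} ‖T(t)‖ < ∞, and (2) for every bounded measurable Q ⊆ Ω with finite measure, lim_{t→∞} ∫_Q ρ_{t,p}(x) dx = 0, where ρ_{t,p} = χ_{φ(t,Ω)} |h_t(φ(−t,·))|^p ρ(φ(−t,·)) |det Dφ(−t,·)|. -/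
open MeasureTheory Filter Topology

/-- The cocycle h_t(x) = exp(∫₀^t h(φ(s,x)) ds). -/
noncomputable def cocycle {E : Type*} (h : E → ℝ) (φ : ℝ → E → E) (t : ℝ) (x : E) : ℝ :=
  Real.exp (∫ s in (0:ℝ)..t, h (φ s x))

/-- The function ρ_{t,p} = χ_{φ(t,Ω)} |h_t(φ(−t,·))|^p ρ(φ(−t,·)) |det Dφ(−t,·)|,
where φinv t is the inverse of φ(t,·) on φ(t,Ω). -/
noncomputable def rhotp {N : ℕ} (Ω : Set (EuclideanSpace ℝ (Fin N)))
    (h : EuclideanSpace ℝ (Fin N) → ℝ)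
    (φ φinv : ℝ → EuclideanSpace ℝ (Fin N) → EuclideanSpace ℝ (Fin N))
    (ρ : EuclideanSpace ℝ (Fin N) → ℝ) (p t : ℝ) :
    EuclideanSpace ℝ (Fin N) → ℝ :=
  (φ t '' Ω).indicator fun y =>
    |cocycle h φ t (φinv t y)| ^ p * ρ (φinv t y) * |(fderiv ℝ (φinv t) y).det|

section Helpers

variable {N : ℕ}

local notation "EE" => EuclideanSpace ℝ (Fin N)

lemma aux_inv_det {Ω : Set EE} (hΩ : IsOpen Ω) {f g : EE → EE}
    (hf : ContDiffOn ℝ 1 f Ω) (hg : ∀ x ∈ Ω, g (f x) = x) {x : EE} (hx : x ∈ Ω)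
    (hd : (fderiv ℝ f x).det ≠ 0) :
    |(fderiv ℝ f x).det| * |(fderiv ℝ g (f x)).det| = 1 := by
  have hfx : ContDiffAt ℝ 1 f x := hf.contDiffAt (hΩ.mem_nhds hx)
  have hs : HasStrictFDerivAt f (fderiv ℝ f x) x := hfx.hasStrictFDerivAt one_ne_zero
  set e := (fderiv ℝ f x).toContinuousLinearEquivOfDetNeZero hd with he
  have hee : (e : EE →L[ℝ] EE) = fderiv ℝ f x := by
    ext1 v; simp [he]
  rw [← hee] at hs
  have hl := hs.to_localInverse
  have heq : g =ᶠ[𝓝 (f x)] hs.localInverse := by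
    rw [Filter.EventuallyEq, ← hs.map_nhds_eq_of_equiv, Filter.eventually_map]
    filter_upwards [hs.eventually_left_inverse, hΩ.mem_nhds hx] with z hz hz'
    rw [hz, hg z hz']
  have hgd : HasFDerivAt g (e.symm : EE →L[ℝ] EE) (f x) :=
    hl.hasFDerivAt.congr_of_eventuallyEq heq
  have hgd' : HasFDerivAt f (e : EE →L[ℝ] EE) x := hs.hasFDerivAt
  rw [hgd.fderiv, ← hee, ← abs_mul]
  have := LinearEquiv.det_mul_det_symm (e.toLinearEquiv)
  have h2 : (e : EE →L[ℝ] EE).det * (e.symm : EE →L[ℝ] EE).det = 1 := this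
  rw [h2, abs_one]

lemma aux_cocycle_cont {Ω : Set EE} {φ : ℝ → EE → EE} {h : EE → ℝ} (hh : ContinuousOn h Ω)
    (hφmaps : ∀ t : ℝ, 0 ≤ t → ∀ x ∈ Ω, φ t x ∈ Ω)
    (hφcont : ContinuousOn (fun q : ℝ × EE => φ q.1 q.2) (Set.Ici 0 ×ˢ Ω))
    {t : ℝ} (ht : 0 ≤ t) : ContinuousOn (cocycle h φ t) Ω := by
  rw [continuousOn_iff_continuous_domRestrict]
  have hc : Continuous (Function.uncurry (fun (x : Ω) (s : ℝ) => h (φ (max s 0) x))) := by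
    have h1 : ContinuousOn (fun q : ℝ × EE => h (φ q.1 q.2)) (Set.Ici 0 ×ˢ Ω) :=
      hh.comp hφcont (fun q hq => hφmaps _ hq.1 _ hq.2)
    have h2 : Continuous (fun q : Ω × ℝ => ((max q.2 0, (q.1 : EE)) : ℝ × EE)) := by fun_prop
    exact h1.comp_continuous h2 (fun q => ⟨Set.mem_Ici.2 (le_max_right _ _), q.1.2⟩)
  have h3 := intervalIntegral.continuous_parametric_intervalIntegral_of_continuous (μ := volume)
    (a₀ := 0) hc (s := fun _ => t) continuous_const
  refine (Real.continuous_exp.comp h3).congr ?_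
  intro x
  simp only [Function.comp, Set.domRestrict_apply, cocycle]
  congr 1
  apply intervalIntegral.integral_congr
  intro s hs
  rw [Set.uIcc_of_le ht] at hs
  simp [max_eq_left hs.1]

lemma aux_cocycle_add {Ω : Set EE} {φ : ℝ → EE → EE} {h : EE → ℝ} (hh : ContinuousOn h Ω)
    (hφmaps : ∀ t : ℝ, 0 ≤ t → ∀ x ∈ Ω, φ t x ∈ Ω)
    (hφsemi : ∀ s t : ℝ, 0 ≤ s → 0 ≤ t → ∀ x ∈ Ω, φ (s + t) x = φ s (φ t x))
    (hφcont : ContinuousOn (fun q : ℝ × EE => φ q.1 q.2) (Set.Ici 0 ×ˢ Ω))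
    {s t : ℝ} (hs : 0 ≤ s) (ht : 0 ≤ t) {x : EE} (hx : x ∈ Ω) :
    cocycle h φ (s + t) x = cocycle h φ t x * cocycle h φ s (φ t x) := by
  have hc : ContinuousOn (fun u : ℝ => h (φ u x)) (Set.Ici 0) := by
    have h1 : ContinuousOn (fun q : ℝ × EE => h (φ q.1 q.2)) (Set.Ici 0 ×ˢ Ω) :=
      hh.comp hφcont (fun q hq => hφmaps _ hq.1 _ hq.2)
    exact h1.comp (f := fun u : ℝ => ((u, x) : ℝ × EE)) (by fun_prop) (fun u hu => ⟨hu, hx⟩)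
  have hi : ∀ a b : ℝ, 0 ≤ a → 0 ≤ b → IntervalIntegrable (fun u : ℝ => h (φ u x)) volume a b := by
    intro a b ha hb
    apply (hc.mono _).intervalIntegrable
    intro u hu
    exact (le_min ha hb).trans hu.1
  unfold cocycle
  rw [← Real.exp_add]
  congr 1
  rw [← intervalIntegral.integral_add_adjacent_intervals (hi 0 t le_rfl ht)
    (hi t (s + t) ht (by positivity))]
  congr 1
  have := intervalIntegral.integral_comp_add_right (a := 0) (b := s) (fun u => h (φ u x)) t
  rw [zero_add] at this
  rw [← this]
  apply intervalIntegral.integral_congr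
  intro u hu
  rw [Set.uIcc_of_le hs] at hu
  simp only
  rw [hφsemi u t hu.1 ht x hx]

lemma aux_rhotp_meas {Ω : Set EE} (hΩ : IsOpen Ω) {φ φinv : ℝ → EE → EE} {h : EE → ℝ}
    {ρ : EE → ℝ} {p t : ℝ} (hρmeas : Measurable ρ)
    (hc : ContinuousOn (cocycle h φ t) Ω)
    (hinj : Set.InjOn (φ t) Ω) (hcont : ContinuousOn (φ t) Ω)
    (hinv : ∀ x ∈ Ω, φinv t (φ t x) = x) :
    Measurable (rhotp Ω h φ φinv ρ p t) := by
  have hemb : MeasurableEmbedding (Ω.domRestrict (φ t)) :=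
    hcont.measurableEmbedding hΩ.measurableSet hinj
  have hG : Measurable (fun x : Ω => |cocycle h φ t x| ^ p * ρ x) := by
    have h1 : Measurable (fun x : Ω => cocycle h φ t x) :=
      (continuousOn_iff_continuous_domRestrict.1 hc).measurable
    have h2 : Measurable (fun x : Ω => ρ x) := hρmeas.comp measurable_subtype_coe
    exact ((h1.abs).pow_const p).mul h2
  have hext := hemb.measurable_extend hG (measurable_const (a := (0 : ℝ)))
  have hdet : Measurable (fun y => |(fderiv ℝ (φinv t) y).det|) :=
    (ContinuousLinearMap.continuous_det.measurable.comp (measurable_fderiv ℝ (φinv t))).abs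
  convert hext.mul hdet using 1
  funext y
  simp only [Pi.mul_apply]
  by_cases hy : y ∈ φ t '' Ω
  · rw [rhotp, Set.indicator_of_mem hy]
    obtain ⟨x, hx, rfl⟩ := hy
    have : Function.extend (Ω.domRestrict (φ t)) (fun x : Ω => |cocycle h φ t x| ^ p * ρ x)
        (fun _ => (0 : ℝ)) (φ t x) = |cocycle h φ t x| ^ p * ρ x :=
      hemb.injective.extend_apply (fun x : Ω => |cocycle h φ t x| ^ p * ρ x)
        (fun _ => (0 : ℝ)) ⟨x, hx⟩
    rw [this, hinv x hx]
  · rw [rhotp, Set.indicator_of_notMem hy, Function.extend_apply', zero_mul]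
    rintro ⟨x, rfl⟩
    exact hy ⟨x, x.2, rfl⟩

/-- Change of variables: the norm of `T(t) f` in terms of `ρ_{t,p}`. -/
lemma aux_change {Ω : Set EE} (hΩ : IsOpen Ω) {φ φinv : ℝ → EE → EE} {h : EE → ℝ}
    {ρ : EE → ℝ} {p t : ℝ} (hρpos : ∀ x ∈ Ω, 0 < ρ x)
    (hmaps : ∀ x ∈ Ω, φ t x ∈ Ω)
    (hinj : Set.InjOn (φ t) Ω) (hC1 : ContDiffOn ℝ 1 (φ t) Ω)
    (hinv : ∀ x ∈ Ω, φinv t (φ t x) = x) {C : ℝ}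
    (hadm : ∀ᵐ x ∂(volume.restrict Ω), |cocycle h φ t x| ^ p * ρ x ≤
          C * ρ (φ t x) * |(fderiv ℝ (φ t) x).det|) (g : EE → ENNReal) :
    ∫⁻ x in Ω, g (φ t x) * ENNReal.ofReal (|cocycle h φ t x| ^ p * ρ x) =
      ∫⁻ y in Ω, g y * ENNReal.ofReal (rhotp Ω h φ φinv ρ p t y) := by
  have hmi : MeasurableSet (φ t '' Ω) :=
    hΩ.measurableSet.image_of_continuousOn_injOn hC1.continuousOn hinj
  have hsub : φ t '' Ω ⊆ Ω := by rintro _ ⟨x, hx, rfl⟩; exact hmaps x hx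
  have hder : ∀ x ∈ Ω, HasFDerivWithinAt (φ t) (fderiv ℝ (φ t) x) Ω x := fun x hx =>
    ((hC1.contDiffAt (hΩ.mem_nhds hx)).differentiableAt one_ne_zero).hasFDerivAt.hasFDerivWithinAt
  have h1 : ∫⁻ y in Ω, g y * ENNReal.ofReal (rhotp Ω h φ φinv ρ p t y) =
      ∫⁻ y in φ t '' Ω, g y * ENNReal.ofReal (rhotp Ω h φ φinv ρ p t y) := by
    have : (fun y => g y * ENNReal.ofReal (rhotp Ω h φ φinv ρ p t y)) =
        (φ t '' Ω).indicator (fun y => g y * ENNReal.ofReal (rhotp Ω h φ φinv ρ p t y)) := by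
      funext y
      by_cases hy : y ∈ φ t '' Ω
      · rw [Set.indicator_of_mem hy]
      · rw [Set.indicator_of_notMem hy, rhotp, Set.indicator_of_notMem hy]; simp
    rw [this, lintegral_indicator hmi, Measure.restrict_restrict hmi,
      Set.inter_eq_left.2 hsub, ← lintegral_indicator hmi, ← lintegral_indicator hmi,
      Set.indicator_indicator, Set.inter_self]
  rw [h1, lintegral_image_eq_lintegral_abs_det_fderiv_mul volume hΩ.measurableSet hder hinj]
  apply lintegral_congr_ae
  filter_upwards [hadm, ae_restrict_mem hΩ.measurableSet] with x hx hxΩ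
  have hpos : 0 < |cocycle h φ t x| ^ p * ρ x :=
    mul_pos (Real.rpow_pos_of_pos (abs_pos.2 (Real.exp_pos _).ne') _) (hρpos x hxΩ)
  have hd : (fderiv ℝ (φ t) x).det ≠ 0 := by
    intro h0
    rw [h0] at hx
    simp at hx
    linarith
  have hk := aux_inv_det hΩ hC1 hinv hxΩ hd
  rw [rhotp, Set.indicator_of_mem (Set.mem_image_of_mem _ hxΩ), hinv x hxΩ, mul_left_comm,
    ← ENNReal.ofReal_mul (abs_nonneg _), mul_left_comm, hk, mul_one]

/-- Boundedness of each `T(t)`. -/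
lemma aux_bound {Ω : Set EE} (hΩ : IsOpen Ω) {φ φinv : ℝ → EE → EE} {h : EE → ℝ}
    {ρ : EE → ℝ} {p t : ℝ} (hρpos : ∀ x ∈ Ω, 0 < ρ x)
    (hmaps : ∀ x ∈ Ω, φ t x ∈ Ω)
    (hinj : Set.InjOn (φ t) Ω) (hC1 : ContDiffOn ℝ 1 (φ t) Ω)
    (hinv : ∀ x ∈ Ω, φinv t (φ t x) = x) {C : ℝ} (hC : 0 ≤ C)
    (hadm : ∀ᵐ x ∂(volume.restrict Ω), |cocycle h φ t x| ^ p * ρ x ≤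
          C * ρ (φ t x) * |(fderiv ℝ (φ t) x).det|) (g : EE → ENNReal) :
    ∫⁻ y in Ω, g y * ENNReal.ofReal (rhotp Ω h φ φinv ρ p t y) ≤
      ENNReal.ofReal C * ∫⁻ y in Ω, g y * ENNReal.ofReal (ρ y) := by
  have hsub : φ t '' Ω ⊆ Ω := by rintro _ ⟨x, hx, rfl⟩; exact hmaps x hx
  have hder : ∀ x ∈ Ω, HasFDerivWithinAt (φ t) (fderiv ℝ (φ t) x) Ω x := fun x hx =>
    ((hC1.contDiffAt (hΩ.mem_nhds hx)).differentiableAt one_ne_zero).hasFDerivAt.hasFDerivWithinAt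
  rw [← aux_change hΩ hρpos hmaps hinj hC1 hinv hadm g, ← lintegral_const_mul' _ _ ENNReal.ofReal_ne_top]
  refine le_trans ?_ (lintegral_mono_set hsub)
  rw [lintegral_image_eq_lintegral_abs_det_fderiv_mul volume hΩ.measurableSet hder hinj]
  apply lintegral_mono_ae
  filter_upwards [hadm] with x hx
  calc _ ≤ g (φ t x) * ENNReal.ofReal (C * ρ (φ t x) * |(fderiv ℝ (φ t) x).det|) := by gcongr
    _ = _ := by
      rw [ENNReal.ofReal_mul' (abs_nonneg _), ENNReal.ofReal_mul hC]
      ring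

/-- Gliding hump argument replacing the uniform boundedness principle. -/
lemma aux_gliding {α : Type*} [MeasurableSpace α] (μ : Measure α) [SigmaFinite μ]
    (w : α → ENNReal) (hw : Measurable w) (hwtop : ∀ x, w x ≠ ⊤) (hw0 : ∀ᵐ x ∂μ, w x ≠ 0)
    (r : ℝ → α → ENNReal) (hr : ∀ t, 0 ≤ t → Measurable (r t))
    (hb : ∀ g : α → ENNReal, Measurable g → ∫⁻ x, g x * w x ∂μ ≠ ⊤ →
      ∃ B : ENNReal, B ≠ ⊤ ∧ ∀ t, 0 ≤ t → ∫⁻ x, g x * r t x ∂μ ≤ B) :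
    ∃ k : ℕ, ∀ t, 0 ≤ t → ∀ᵐ x ∂μ, r t x ≤ 4 ^ k * w x := by
  by_contra! hcon
  choose t ht hk using hcon
  have hν : SigmaFinite (μ.withDensity w) :=
    SigmaFinite.withDensity_of_ne_top (Eventually.of_forall hwtop)
  have hA : ∀ k, ∃ A : Set α, A ⊆ {x | 4 ^ k * w x < r (t k) x} ∧ MeasurableSet A ∧
      μ.withDensity w A ≠ 0 ∧ μ.withDensity w A ≠ ⊤ := by
    intro k
    have hS : MeasurableSet {x | 4 ^ k * w x < r (t k) x} :=
      measurableSet_lt (hw.const_mul _) (hr _ (ht k))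
    have hpos : μ.withDensity w {x | 4 ^ k * w x < r (t k) x} ≠ 0 := by
      intro h0
      rw [withDensity_apply_eq_zero hw] at h0
      apply (hk k)
      have h1 : ∀ᵐ x ∂μ, x ∉ ({x | w x ≠ 0} ∩ {x | 4 ^ k * w x < r (t k) x}) :=
        measure_eq_zero_iff_ae_notMem.1 h0
      filter_upwards [h1, hw0] with x hx hx0 hlt
      exact hx ⟨hx0, hlt⟩
    obtain ⟨A, hAm, hAS, hA0, hAt⟩ :=
      Measure.exists_subset_measure_lt_top hS (pos_iff_ne_zero.2 hpos)
    exact ⟨A, hAS, hAm, hA0.ne', hAt.ne⟩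
  choose A hAS hAm hA0 hAt using hA
  set ν := μ.withDensity w with hνdef
  let c : ℕ → ENNReal := fun k => (2⁻¹) ^ k * (ν (A k))⁻¹
  have hAw : ∀ k, ∫⁻ x in A k, w x ∂μ = ν (A k) := fun k => (withDensity_apply w (hAm k)).symm
  let g : α → ENNReal := fun x => ∑' k, (A k).indicator (fun _ => c k) x
  have hgm : Measurable g :=
    Measurable.tsum fun k => measurable_const.indicator (hAm k)
  have hind : ∀ k (u : α → ENNReal), Measurable u →
      ∫⁻ x, (A k).indicator (fun _ => c k) x * u x ∂μ = c k * ∫⁻ x in A k, u x ∂μ := by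
    intro k u hu
    rw [← lintegral_const_mul _ hu, ← lintegral_indicator (hAm k)]
    congr 1; funext x
    by_cases hx : x ∈ A k <;> simp [hx]
  have hgw : ∫⁻ x, g x * w x ∂μ = 2 := by
    simp only [g, ← ENNReal.tsum_mul_right]
    have hmk : ∀ k, AEMeasurable (fun x => (A k).indicator (fun _ => c k) x * w x) μ := fun k =>
      ((measurable_const.indicator (hAm k)).mul hw).aemeasurable
    rw [lintegral_tsum hmk]
    have : ∀ k, ∫⁻ x, (A k).indicator (fun _ => c k) x * w x ∂μ = (2⁻¹ : ENNReal) ^ k := by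
      intro k
      rw [hind k w hw, hAw, mul_assoc, ENNReal.inv_mul_cancel (hA0 k) (hAt k), mul_one]
    simp only [this]
    rw [ENNReal.tsum_geometric, ENNReal.one_sub_inv_two, inv_inv]
  obtain ⟨B, hB, hBt⟩ := hb g hgm (by rw [hgw]; simp)
  have hlow : ∀ k : ℕ, (2 : ENNReal) ^ k ≤ B := by
    intro k
    refine le_trans ?_ (hBt (t k) (ht k))
    calc (2 : ENNReal) ^ k = c k * ∫⁻ x in A k, 4 ^ k * w x ∂μ := by
          rw [lintegral_const_mul _ hw, hAw]
          have h4 : (4 : ENNReal) ^ k = 2 ^ k * 2 ^ k := by rw [← mul_pow]; norm_num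
          calc (2 : ENNReal) ^ k = ((2⁻¹ * 2) ^ k) * 2 ^ k * ((ν (A k))⁻¹ * ν (A k)) := by
                rw [ENNReal.inv_mul_cancel (hA0 k) (hAt k),
                  ENNReal.inv_mul_cancel two_ne_zero ENNReal.ofNat_ne_top]; simp
            _ = _ := by rw [h4, mul_pow]; simp only [c]; ring
      _ ≤ c k * ∫⁻ x in A k, r (t k) x ∂μ := by
          refine mul_le_mul_right ?_ _
          exact setLIntegral_mono' (hAm k) fun x hx => (hAS k hx).le
      _ = ∫⁻ x, (A k).indicator (fun _ => c k) x * r (t k) x ∂μ := (hind k _ (hr _ (ht k))).symm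
      _ ≤ _ := by
          apply lintegral_mono
          intro x
          simp only
          gcongr
          exact ENNReal.le_tsum (f := fun k => (A k).indicator (fun _ => c k) x) k
  obtain ⟨n, hn⟩ := ENNReal.exists_nat_gt hB
  have h2n : (n : ENNReal) ≤ 2 ^ n := by exact_mod_cast (Nat.lt_two_pow_self (n := n)).le
  exact absurd (h2n.trans (hlow n)) (not_le.2 hn)

end Helpers

/-- Theorem 2 (multidimensional case): the weighted composition semigroup
(T(t)f)(x) = h_t(x) f(φ(t,x)) on L^p_ρ(Ω) is stable iff it is bounded and
∫_Q ρ_{t,p} → 0 for every bounded measurable Q ⊆ Ω of finite measure. -/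
theorem stmt4 {N : ℕ} (Ω : Set (EuclideanSpace ℝ (Fin N))) (hΩ : IsOpen Ω)
    (p : ℝ) (hp : 1 ≤ p)
    (φ φinv : ℝ → EuclideanSpace ℝ (Fin N) → EuclideanSpace ℝ (Fin N))
    (h : EuclideanSpace ℝ (Fin N) → ℝ) (hh : ContinuousOn h Ω)
    (ρ : EuclideanSpace ℝ (Fin N) → ℝ) (hρpos : ∀ x ∈ Ω, 0 < ρ x)
    (hρmeas : Measurable ρ)
    (hρloc : ∀ K : Set (EuclideanSpace ℝ (Fin N)), K ⊆ Ω → IsCompact K → IntegrableOn ρ K)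
    (hφ0 : ∀ x ∈ Ω, φ 0 x = x)
    (hφmaps : ∀ t : ℝ, 0 ≤ t → ∀ x ∈ Ω, φ t x ∈ Ω)
    (hφsemi : ∀ s t : ℝ, 0 ≤ s → 0 ≤ t → ∀ x ∈ Ω, φ (s + t) x = φ s (φ t x))
    (hφinj : ∀ t : ℝ, 0 ≤ t → Set.InjOn (φ t) Ω)
    (hφC1 : ∀ t : ℝ, 0 ≤ t → ContDiffOn ℝ 1 (φ t) Ω)
    (hφcont : ContinuousOn (fun q : ℝ × EuclideanSpace ℝ (Fin N) => φ q.1 q.2)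
      (Set.Ici 0 ×ˢ Ω))
    (hinv : ∀ t : ℝ, 0 ≤ t → ∀ x ∈ Ω, φinv t (φ t x) = x)
    (hadm : ∃ M ω : ℝ, 1 ≤ M ∧ ∀ t : ℝ, 0 ≤ t →
      ∀ᵐ x ∂(volume.restrict Ω),
        |cocycle h φ t x| ^ p * ρ x ≤
          M * Real.exp (ω * t) * ρ (φ t x) * |(fderiv ℝ (φ t) x).det|) :
    (∀ f : EuclideanSpace ℝ (Fin N) → ℝ, Measurable f →
        IntegrableOn (fun x => |f x| ^ p * ρ x) Ω →
        Tendsto (fun t => ∫ x in Ω, |cocycle h φ t x * f (φ t x)| ^ p * ρ x)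
          atTop (𝓝 0)) ↔
      ((∃ M : ℝ, ∀ t : ℝ, 0 ≤ t →
          ∀ᵐ x ∂(volume.restrict Ω), rhotp Ω h φ φinv ρ p t x ≤ M * ρ x) ∧
        (∀ Q : Set (EuclideanSpace ℝ (Fin N)), Q ⊆ Ω → MeasurableSet Q →
          Bornology.IsBounded Q → volume Q < ⊤ →
          Tendsto (fun t => ∫ x in Q, rhotp Ω h φ φinv ρ p t x) atTop (𝓝 0))) := by
  obtain ⟨M, ω, hM, hadm⟩ := hadm
  have hp0 : 0 < p := by linarith
  have hCnn : ∀ t : ℝ, 0 ≤ M * Real.exp (ω * t) := fun t => by positivity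
  have hcc : ∀ t : ℝ, 0 ≤ t → ContinuousOn (cocycle h φ t) Ω := fun t ht =>
    aux_cocycle_cont hh hφmaps hφcont ht
  set μ := (volume.restrict Ω : Measure (EuclideanSpace ℝ (Fin N))) with hμ
  set r : ℝ → EuclideanSpace ℝ (Fin N) → ENNReal := fun t y =>
    ENNReal.ofReal (rhotp Ω h φ φinv ρ p t y) with hr
  set w : EuclideanSpace ℝ (Fin N) → ENNReal := fun y => ENNReal.ofReal (ρ y) with hw
  have hRm : ∀ t : ℝ, 0 ≤ t → Measurable (rhotp Ω h φ φinv ρ p t) := fun t ht =>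
    aux_rhotp_meas hΩ hρmeas (hcc t ht) (hφinj t ht) (hφC1 t ht).continuousOn (hinv t ht)
  have hrm : ∀ t : ℝ, 0 ≤ t → Measurable (r t) := fun t ht => (hRm t ht).ennreal_ofReal
  have hwm : Measurable w := hρmeas.ennreal_ofReal
  have hRnn : ∀ t : ℝ, 0 ≤ t → ∀ y, 0 ≤ rhotp Ω h φ φinv ρ p t y := by
    intro t ht y
    rw [rhotp]
    apply Set.indicator_nonneg
    rintro _ ⟨x, hx, rfl⟩
    rw [hinv t ht x hx]
    have := (hρpos x hx).le
    positivity
  have hmemΩ : ∀ᵐ x ∂μ, x ∈ Ω := ae_restrict_mem hΩ.measurableSet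
  have hchange : ∀ t : ℝ, 0 ≤ t → ∀ g : EuclideanSpace ℝ (Fin N) → ENNReal,
      ∫⁻ x, g (φ t x) * ENNReal.ofReal (|cocycle h φ t x| ^ p * ρ x) ∂μ =
        ∫⁻ y, g y * r t y ∂μ := fun t ht g =>
    aux_change hΩ hρpos (hφmaps t ht) (hφinj t ht) (hφC1 t ht) (hinv t ht) (hadm t ht) g
  have hbound : ∀ t : ℝ, 0 ≤ t → ∀ g : EuclideanSpace ℝ (Fin N) → ENNReal,
      ∫⁻ y, g y * r t y ∂μ ≤
        ENNReal.ofReal (M * Real.exp (ω * t)) * ∫⁻ y, g y * w y ∂μ := fun t ht g =>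
    aux_bound hΩ hρpos (hφmaps t ht) (hφinj t ht) (hφC1 t ht) (hinv t ht) (hCnn t) (hadm t ht) g
  -- measurability of functions on `Ω`
  have hφae : ∀ t : ℝ, 0 ≤ t → AEMeasurable (φ t) μ := fun t ht =>
    (hφC1 t ht).continuousOn.aemeasurable hΩ.measurableSet
  have hcae : ∀ t : ℝ, 0 ≤ t → AEMeasurable (cocycle h φ t) μ := fun t ht =>
    (hcc t ht).aemeasurable hΩ.measurableSet
  have hindm : ∀ s : ℝ, 0 ≤ s → ∀ f : EuclideanSpace ℝ (Fin N) → ℝ, Measurable f →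
      Measurable (Ω.indicator fun x => cocycle h φ s x * f (φ s x)) := by
    intro s hs f hf
    have h1 : Measurable (fun x : Ω => cocycle h φ s x) :=
      (continuousOn_iff_continuous_domRestrict.1 (hcc s hs)).measurable
    have h2 : Measurable (fun x : Ω => φ s x) :=
      (continuousOn_iff_continuous_domRestrict.1 (hφC1 s hs).continuousOn).measurable
    have h3 := (MeasurableEmbedding.subtype_coe hΩ.measurableSet).measurable_extend
      (h1.mul (hf.comp h2)) (measurable_const (a := (0 : ℝ)))
    convert h3 using 1
    funext x
    by_cases hx : x ∈ Ω
    · rw [Set.indicator_of_mem hx]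
      exact (Subtype.val_injective.extend_apply
        (fun x : Ω => cocycle h φ s x * f (φ s x)) (fun _ => (0 : ℝ)) ⟨x, hx⟩).symm
    · rw [Set.indicator_of_notMem hx, Function.extend_apply']
      rintro ⟨y, rfl⟩
      exact hx y.2
  have hfm : ∀ f : EuclideanSpace ℝ (Fin N) → ℝ, Measurable f →
      Measurable (fun x => ENNReal.ofReal (|f x| ^ p)) := fun f hf =>
    ((hf.abs).pow_const p).ennreal_ofReal
  -- real integrals as lower integrals
  have hS : ∀ t : ℝ, 0 ≤ t → ∀ f : EuclideanSpace ℝ (Fin N) → ℝ, Measurable f →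
      ∫ x, |cocycle h φ t x * f (φ t x)| ^ p * ρ x ∂μ =
        (∫⁻ y, ENNReal.ofReal (|f y| ^ p) * r t y ∂μ).toReal := by
    intro t ht f hf
    rw [integral_eq_lintegral_of_nonneg_ae, ← hchange t ht]
    · congr 1
      apply lintegral_congr
      intro x
      rw [← ENNReal.ofReal_mul (by positivity), abs_mul,
        Real.mul_rpow (abs_nonneg _) (abs_nonneg _)]
      congr 1; ring
    · filter_upwards [hmemΩ] with x hx
      have := (hρpos x hx).le
      simp only [Pi.zero_apply]
      positivity
    · apply AEMeasurable.aestronglyMeasurable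
      have h1 : AEMeasurable (fun x => f (φ t x)) μ := hf.comp_aemeasurable (hφae t ht)
      have h2 := (hcae t ht).mul h1
      have h3 : AEMeasurable (fun x => |cocycle h φ t x * f (φ t x)| ^ p) μ :=
        ((continuous_abs.measurable).comp_aemeasurable h2).pow_const p
      exact h3.mul hρmeas.aemeasurable
  have hInt : ∀ f : EuclideanSpace ℝ (Fin N) → ℝ, Measurable f →
      (IntegrableOn (fun x => |f x| ^ p * ρ x) Ω ↔
        ∫⁻ y, ENNReal.ofReal (|f y| ^ p) * w y ∂μ ≠ ⊤) := by
    intro f hf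
    have hm : Measurable (fun x => |f x| ^ p * ρ x) := ((hf.abs).pow_const p).mul hρmeas
    have hnn : 0 ≤ᵐ[μ] (fun x => |f x| ^ p * ρ x) := by
      filter_upwards [hmemΩ] with x hx
      have := (hρpos x hx).le
      simp only [Pi.zero_apply]
      positivity
    have heq : ∫⁻ y, ENNReal.ofReal (|f y| ^ p) * w y ∂μ =
        ∫⁻ y, ENNReal.ofReal (|f y| ^ p * ρ y) ∂μ := by
      apply lintegral_congr
      intro y
      rw [ENNReal.ofReal_mul (by positivity)]
    rw [heq, IntegrableOn, ← lt_top_iff_ne_top]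
    rw [← hasFiniteIntegral_iff_ofReal hnn]
    exact ⟨fun H => H.2, fun H => ⟨hm.aestronglyMeasurable, H⟩⟩
  have hQint : ∀ Q : Set (EuclideanSpace ℝ (Fin N)), MeasurableSet Q → Q ⊆ Ω →
      ∀ t : ℝ, 0 ≤ t → ∫ x in Q, rhotp Ω h φ φinv ρ p t x =
        (∫⁻ y, Q.indicator (fun _ => (1 : ENNReal)) y * r t y ∂μ).toReal := by
    intro Q hQ hQΩ t ht
    rw [integral_eq_lintegral_of_nonneg_ae (Eventually.of_forall (hRnn t ht))
      (hRm t ht).aestronglyMeasurable]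
    congr 1
    have : (fun y => Q.indicator (fun _ => (1 : ENNReal)) y * r t y) = Q.indicator (r t) := by
      funext y
      by_cases hy : y ∈ Q <;> simp [hy]
    rw [this, lintegral_indicator hQ, hμ, Measure.restrict_restrict hQ,
      Set.inter_eq_left.2 hQΩ]
  constructor
  · intro hst
    constructor
    · -- uniform boundedness
      have hw0 : ∀ᵐ x ∂μ, w x ≠ 0 := by
        filter_upwards [hmemΩ] with x hx
        simpa [hw] using hρpos x hx
      obtain ⟨k, hk⟩ := aux_gliding μ w hwm (fun x => ENNReal.ofReal_ne_top) hw0 r hrm (by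
        intro g hg hgfin
        have hgtop : ∀ᵐ x ∂μ, g x ≠ ⊤ := by
          filter_upwards [ae_lt_top (hg.mul hwm) hgfin, hw0] with x hx hx0 htop
          simp only [Pi.mul_apply, htop] at hx
          rw [ENNReal.top_mul hx0] at hx
          exact lt_irrefl _ hx
        let f : EuclideanSpace ℝ (Fin N) → ℝ := fun x => (g x).toReal ^ (1 / p)
        have hf : Measurable f := hg.ennreal_toReal.pow_const _
        have hfg : ∀ᵐ x ∂μ, ENNReal.ofReal (|f x| ^ p) = g x := by
          filter_upwards [hgtop] with x hx
          have h0 : 0 ≤ (g x).toReal := ENNReal.toReal_nonneg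
          rw [abs_of_nonneg (Real.rpow_nonneg h0 _), ← Real.rpow_mul h0,
            one_div_mul_cancel hp0.ne', Real.rpow_one, ENNReal.ofReal_toReal hx]
        have hfgI : ∀ u : EuclideanSpace ℝ (Fin N) → ENNReal,
            ∫⁻ y, ENNReal.ofReal (|f y| ^ p) * u y ∂μ = ∫⁻ y, g y * u y ∂μ := by
          intro u
          apply lintegral_congr_ae
          filter_upwards [hfg] with x hx
          rw [hx]
        have hlim := hst f hf ((hInt f hf).2 (by rw [hfgI]; exact hgfin))
        obtain ⟨T, hT⟩ := eventually_atTop.1 (hlim.eventually (gt_mem_nhds one_pos))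
        have hfin : ∀ t : ℝ, 0 ≤ t → ∫⁻ y, g y * r t y ∂μ ≠ ⊤ := fun t ht =>
          ((hbound t ht g).trans_lt
            (ENNReal.mul_lt_top ENNReal.ofReal_lt_top hgfin.lt_top)).ne
        refine ⟨1 + ENNReal.ofReal (M * Real.exp (|ω| * |T|)) * ∫⁻ y, g y * w y ∂μ, ?_, ?_⟩
        · exact ENNReal.add_ne_top.2
            ⟨ENNReal.one_ne_top, ENNReal.mul_ne_top ENNReal.ofReal_ne_top hgfin⟩
        · intro t ht
          rcases le_total T t with hTt | hTt
          · refine le_trans ?_ le_self_add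
            have h1 := hT t hTt
            rw [hS t ht f hf, hfgI] at h1
            rw [← ENNReal.ofReal_toReal (hfin t ht), ← ENNReal.ofReal_one]
            exact ENNReal.ofReal_le_ofReal h1.le
          · refine le_trans (hbound t ht g) (le_trans ?_ le_add_self)
            gcongr
            · exact le_abs_self ω
            · exact hTt.trans (le_abs_self T))
      refine ⟨4 ^ k, fun t ht => ?_⟩
      filter_upwards [hk t ht, hmemΩ] with x hx hxΩ
      have h4 : (4 : ENNReal) ^ k * w x = ENNReal.ofReal (4 ^ k * ρ x) := by
        rw [ENNReal.ofReal_mul (by positivity), ENNReal.ofReal_pow (by norm_num)]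
        simp [hw]
      rw [h4] at hx
      exact (ENNReal.ofReal_le_ofReal_iff
        (mul_nonneg (by positivity) (hρpos x hxΩ).le)).1 hx
    · -- convergence on sets
      intro Q hQΩ hQ _ _
      set χ : EuclideanSpace ℝ (Fin N) → ENNReal := Q.indicator (fun _ => (1 : ENNReal)) with hχ
      suffices H : Tendsto (fun t => (∫⁻ y, χ y * r t y ∂μ).toReal) atTop (𝓝 0) by
        refine H.congr' ?_
        filter_upwards [eventually_ge_atTop 0] with t ht
        rw [hQint Q hQ hQΩ t ht]
      by_cases hex : ∃ s : ℝ, 0 ≤ s ∧ ∫⁻ y, χ y * r s y ∂μ ≠ ⊤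
      · obtain ⟨s, hs, hsfin⟩ := hex
        let q : EuclideanSpace ℝ (Fin N) → ℝ := Q.indicator (fun _ => (1 : ℝ))
        have hq : Measurable q := measurable_const.indicator hQ
        have hqχ : ∀ y, ENNReal.ofReal (|q y| ^ p) = χ y := by
          intro y
          by_cases hy : y ∈ Q
          · simp [q, hχ, hy]
          · simp [q, hχ, hy, Real.zero_rpow hp0.ne']
        let f : EuclideanSpace ℝ (Fin N) → ℝ := Ω.indicator fun x => cocycle h φ s x * q (φ s x)
        have hf : Measurable f := hindm s hs q hq
        have hfp : ∀ x ∈ Ω, ENNReal.ofReal (|f x| ^ p) =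
            χ (φ s x) * ENNReal.ofReal (|cocycle h φ s x| ^ p) := by
          intro x hx
          simp only [f]
          rw [Set.indicator_of_mem hx, ← hqχ, ← ENNReal.ofReal_mul (by positivity), abs_mul,
            Real.mul_rpow (abs_nonneg _) (abs_nonneg _), mul_comm]
        have hfint : ∫⁻ y, ENNReal.ofReal (|f y| ^ p) * w y ∂μ = ∫⁻ y, χ y * r s y ∂μ := by
          rw [← hchange s hs]
          apply lintegral_congr_ae
          filter_upwards [hmemΩ] with x hx
          rw [hfp x hx, ENNReal.ofReal_mul (by positivity), mul_assoc]
        have hlim := hst f hf ((hInt f hf).2 (by rw [hfint]; exact hsfin))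
        have hkey : ∀ t : ℝ, 0 ≤ t → ∫⁻ y, ENNReal.ofReal (|f y| ^ p) * r t y ∂μ =
            ∫⁻ y, χ y * r (s + t) y ∂μ := by
          intro t ht
          rw [← hchange t ht (fun y => ENNReal.ofReal (|f y| ^ p)),
            ← hchange (s + t) (by positivity)]
          apply lintegral_congr_ae
          filter_upwards [hmemΩ] with x hx
          rw [hfp _ (hφmaps t ht x hx), hφsemi s t hs ht x hx,
            aux_cocycle_add hh hφmaps hφsemi hφcont hs ht hx, mul_assoc,
            ← ENNReal.ofReal_mul (by positivity), abs_mul,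
            Real.mul_rpow (abs_nonneg _) (abs_nonneg _)]
          congr 2; ring
        have hsh : Tendsto (fun t : ℝ => t - s) atTop atTop :=
          tendsto_atTop_add_const_right _ (-s) tendsto_id
        refine (hlim.comp hsh).congr' ?_
        filter_upwards [eventually_ge_atTop s] with t ht
        simp only [Function.comp]
        rw [hS (t - s) (by linarith) f hf, hkey (t - s) (by linarith), add_sub_cancel]
      · push Not at hex
        refine tendsto_const_nhds.congr' ?_
        filter_upwards [eventually_ge_atTop 0] with t ht
        rw [hex t ht]; simp
  · rintro ⟨⟨M', hM'⟩, hQ0⟩ f hf hfint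
    have hfin := (hInt f hf).1 hfint
    set F : EuclideanSpace ℝ (Fin N) → ENNReal := fun x => ENNReal.ofReal (|f x| ^ p) with hF
    have hFm : Measurable F := hfm f hf
    have hrM : ∀ t : ℝ, 0 ≤ t → ∀ᵐ x ∂μ, r t x ≤ ENNReal.ofReal M' * w x := by
      intro t ht
      filter_upwards [hM' t ht, hmemΩ] with x hx hxΩ
      rw [hr, hw]
      simp only
      rw [← ENNReal.ofReal_mul' (hρpos x hxΩ).le]
      exact ENNReal.ofReal_le_ofReal hx
    suffices H : Tendsto (fun t => ∫⁻ y, F y * r t y ∂μ) atTop (𝓝 0) by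
      have H2 := (ENNReal.tendsto_toReal ENNReal.zero_ne_top).comp H
      rw [ENNReal.toReal_zero] at H2
      refine H2.congr' ?_
      filter_upwards [eventually_ge_atTop 0] with t ht
      rw [hS t ht f hf]
      rfl
    let Q : ℕ → Set (EuclideanSpace ℝ (Fin N)) := fun n =>
      Ω ∩ ({x | ‖x‖ ≤ n} ∩ ({x | |f x| ≤ n} ∩ {x | ρ x ≤ n}))
    have hQm : ∀ n, MeasurableSet (Q n) := fun n =>
      hΩ.measurableSet.inter ((measurableSet_le measurable_norm measurable_const).inter
        ((measurableSet_le hf.abs measurable_const).inter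
          (measurableSet_le hρmeas measurable_const)))
    have hQb : ∀ n, Bornology.IsBounded (Q n) := fun n =>
      (Metric.isBounded_closedBall (x := 0) (r := (n : ℝ))).subset (by
        intro x hx
        simpa using hx.2.1)
    have hQv : ∀ n, volume (Q n) < ⊤ := fun n => (hQb n).measure_lt_top
    have hQfin : ∀ n (t : ℝ), 0 ≤ t →
        ∫⁻ y, (Q n).indicator (fun _ => (1 : ENNReal)) y * r t y ∂μ ≠ ⊤ := by
      intro n t ht
      have h1 : ∫⁻ y, (Q n).indicator (fun _ => (1 : ENNReal)) y * r t y ∂μ ≤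
          ∫⁻ y, (Q n).indicator (fun _ => ENNReal.ofReal M' * ENNReal.ofReal n) y ∂μ := by
        apply lintegral_mono_ae
        filter_upwards [hrM t ht] with x hx
        by_cases hxQ : x ∈ Q n
        · simp only [Set.indicator_of_mem hxQ, one_mul]
          refine hx.trans ?_
          gcongr
          exact ENNReal.ofReal_le_ofReal hxQ.2.2.2
        · simp [hxQ]
      refine (h1.trans_lt ?_).ne
      rw [lintegral_indicator_const (hQm n)]
      refine ENNReal.mul_lt_top (ENNReal.mul_lt_top ENNReal.ofReal_lt_top ENNReal.ofReal_lt_top) ?_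
      exact (Measure.restrict_apply_le _ _).trans_lt (hQv n)
    have hQlim : ∀ n, Tendsto
        (fun t => ∫⁻ y, (Q n).indicator (fun _ => (1 : ENNReal)) y * r t y ∂μ) atTop (𝓝 0) := by
      intro n
      have h1 := ENNReal.tendsto_ofReal
        (hQ0 (Q n) Set.inter_subset_left (hQm n) (hQb n) (hQv n))
      rw [ENNReal.ofReal_zero] at h1
      refine h1.congr' ?_
      filter_upwards [eventually_ge_atTop 0] with t ht
      rw [hQint (Q n) (hQm n) Set.inter_subset_left t ht, ENNReal.ofReal_toReal (hQfin n t ht)]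
    -- the tails
    have htail : Tendsto (fun n : ℕ => ENNReal.ofReal M' *
        ∫⁻ y, (Q n)ᶜ.indicator (fun y => F y * w y) y ∂μ) atTop (𝓝 0) := by
      have h1 : Tendsto (fun n : ℕ => ∫⁻ y, (Q n)ᶜ.indicator (fun y => F y * w y) y ∂μ)
          atTop (𝓝 (∫⁻ _, 0 ∂μ)) := by
        apply tendsto_lintegral_of_dominated_convergence (fun y => F y * w y)
        · intro n
          exact (hFm.mul hwm).indicator (hQm n).compl
        · intro n
          exact Eventually.of_forall fun x => Set.indicator_le_self _ _ x
        · exact hfin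
        · filter_upwards [hmemΩ] with x hx
          refine tendsto_const_nhds.congr' ?_
          obtain ⟨n₀, hn₀⟩ := exists_nat_ge (max ‖x‖ (max |f x| (ρ x)))
          filter_upwards [eventually_ge_atTop n₀] with n hn
          have hn' : max ‖x‖ (max |f x| (ρ x)) ≤ (n : ℝ) := hn₀.trans (by exact_mod_cast hn)
          simp only [max_le_iff] at hn'
          have hxQ : x ∈ Q n := ⟨hx, hn'.1, hn'.2.1, hn'.2.2⟩
          simp [hxQ]
      rw [lintegral_zero] at h1
      have h2 := ENNReal.Tendsto.const_mul (a := ENNReal.ofReal M') h1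
        (Or.inr ENNReal.ofReal_ne_top)
      rwa [mul_zero] at h2
    have hsplit : ∀ (n : ℕ) (t : ℝ), 0 ≤ t → ∫⁻ y, F y * r t y ∂μ ≤
        ENNReal.ofReal ((n : ℝ) ^ p) *
          (∫⁻ y, (Q n).indicator (fun _ => (1 : ENNReal)) y * r t y ∂μ) +
        ENNReal.ofReal M' * ∫⁻ y, (Q n)ᶜ.indicator (fun y => F y * w y) y ∂μ := by
      intro n t ht
      have hmn : Measurable
          (fun y => ENNReal.ofReal M' * (Q n)ᶜ.indicator (fun y => F y * w y) y) :=
        ((hFm.mul hwm).indicator (hQm n).compl).const_mul _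
      rw [← lintegral_const_mul' _ _ ENNReal.ofReal_ne_top,
        ← lintegral_const_mul' _ _ ENNReal.ofReal_ne_top,
        ← lintegral_add_right _ hmn]
      apply lintegral_mono_ae
      filter_upwards [hrM t ht] with x hx
      by_cases hxQ : x ∈ Q n
      · simp only [Set.indicator_of_mem hxQ, one_mul]
        refine le_trans ?_ le_self_add
        gcongr
        exact ENNReal.ofReal_le_ofReal
          (Real.rpow_le_rpow (abs_nonneg _) hxQ.2.2.1 hp0.le)
      · have hxQ' : x ∈ (Q n)ᶜ := hxQ
        rw [Set.indicator_of_mem hxQ']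
        refine le_trans ?_ le_add_self
        rw [mul_left_comm]
        gcongr
    rw [ENNReal.tendsto_nhds_zero]
    intro ε hε
    have hε2 : 0 < ε / 2 := ENNReal.half_pos hε.ne'
    obtain ⟨n, hn⟩ := ((ENNReal.tendsto_nhds_zero.1 htail) (ε / 2) hε2).exists
    have h2 := ENNReal.Tendsto.const_mul (a := ENNReal.ofReal ((n : ℝ) ^ p)) (hQlim n)
        (Or.inr ENNReal.ofReal_ne_top)
    rw [mul_zero] at h2
    filter_upwards [(ENNReal.tendsto_nhds_zero.1 h2) (ε / 2) hε2, eventually_ge_atTop 0]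
      with t ht1 ht
    calc _ ≤ _ := hsplit n t ht
      _ ≤ ε / 2 + ε / 2 := add_le_add ht1 hn
      _ = ε := ENNReal.add_halves ε
end

section
/- Let Ω = (α, β) be a bounded interval, F ∈ C¹([α,β]) decreasing with F(α) = 0 and F(x) < 0 for x ∈ (α, β], with semiflow φ defined for all t ≥ 0, such that every x ∈ (α,β) eventually leaves φ(t̄, Ω) for some t̄ > 0. Let h = −λ F' for some λ ∈ ℝ, and assume ρ = 1 is p-admissible. Then for the semigroup T_{F,h} on L^p(Ω) the following are equivalent: (i) T_{F,h} is stable; (ii) T_{F,h} is not hypercyclic; (iii) λ ≤ −1/p. -/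
open MeasureTheory Filter Topology Set

/-- The weighted composition semigroup applied to f. -/
noncomputable def Tapp (h : ℝ → ℝ) (φ : ℝ → ℝ → ℝ) (t : ℝ) (f : ℝ → ℝ) (x : ℝ) : ℝ :=
  Real.exp (∫ s in (0:ℝ)..t, h (φ s x)) * f (φ t x)

/-- Stability of T_{F,h} on L^p(α,β): all orbits tend to 0 in L^p norm. -/
def StableLp (α β p : ℝ) (h : ℝ → ℝ) (φ : ℝ → ℝ → ℝ) : Prop :=
  ∀ f : ℝ → ℝ, Measurable f → IntegrableOn (fun x => |f x| ^ p) (Ioo α β) →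
    Tendsto (fun t => ∫ x in Ioo α β, |Tapp h φ t f x| ^ p) atTop (𝓝 0)

/-- Hypercyclicity of T_{F,h} on L^p(α,β): some orbit is dense. -/
def HypercyclicLp (α β p : ℝ) (h : ℝ → ℝ) (φ : ℝ → ℝ → ℝ) : Prop :=
  ∃ f : ℝ → ℝ, Measurable f ∧ IntegrableOn (fun x => |f x| ^ p) (Ioo α β) ∧
    ∀ g : ℝ → ℝ, Measurable g → IntegrableOn (fun x => |g x| ^ p) (Ioo α β) →
      ∀ ε : ℝ, 0 < ε → ∃ t : ℝ, 0 ≤ t ∧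
        (∫ x in Ioo α β, |Tapp h φ t f x - g x| ^ p) < ε

lemma flow_struct (α β lam : ℝ) (hab : α < β)
    (F : ℝ → ℝ) (hF : ContDiffOn ℝ 1 F (Icc α β))
    (hanti : AntitoneOn F (Icc α β)) (hFα : F α = 0)
    (hFneg : ∀ x ∈ Ioc α β, F x < 0)
    (φ : ℝ → ℝ → ℝ)
    (hφ0 : ∀ x ∈ Ioo α β, φ 0 x = x)
    (hmem : ∀ t : ℝ, 0 ≤ t → ∀ x ∈ Ioo α β, φ t x ∈ Ioo α β)
    (hode : ∀ x ∈ Ioo α β, ∀ t : ℝ, 0 ≤ t →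
      HasDerivWithinAt (fun s => φ s x) (F (φ t x)) (Ici 0) t)
    (h : ℝ → ℝ) (hdef : ∀ x ∈ Icc α β, h x = -lam * deriv F x) :
    ∃ H G w : ℝ → ℝ, Measurable H ∧ Measurable G ∧ Measurable w ∧
      (∀ u, 0 < u → H u ∈ Ioo α β) ∧ (∀ x ∈ Ioo α β, 0 < G x) ∧
      (∀ u, 0 < u → G (H u) = u) ∧ (∀ x ∈ Ioo α β, H (G x) = x) ∧
      (∀ u, 0 < u → HasDerivAt H (-(w u)) u) ∧ (∀ u, 0 < u → 0 < w u) ∧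
      AntitoneOn w (Ioi 0) ∧ Tendsto w atTop (𝓝 0) ∧
      ∀ t, 0 ≤ t → ∀ x ∈ Ioo α β, φ t x = H (G x + t) ∧
        Real.exp (∫ s in (0:ℝ)..t, h (φ s x)) = w (G x + t) ^ (-lam) * w (G x) ^ lam := by
  have hFc : ContinuousOn F (Icc α β) := hF.continuousOn
  have hFd : ∀ x ∈ Ioo α β, HasDerivAt F (deriv F x) x := by
    intro x hx
    have h1 : ContDiffAt ℝ 1 F x := hF.contDiffAt (Icc_mem_nhds hx.1 hx.2)
    exact (h1.differentiableAt (by norm_num)).hasDerivAt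
  have hFdc : ContinuousOn (deriv F) (Ioo α β) :=
    (hF.mono Ioo_subset_Icc_self).continuousOn_deriv_of_isOpen isOpen_Ioo le_rfl
  -- extended reciprocal
  set a : ℝ → ℝ := fun s => (-F (min s β))⁻¹ with ha
  have hmin : ∀ s, α < s → min s β ∈ Ioc α β := fun s hs => ⟨lt_min hs hab, min_le_right _ _⟩
  have hapos : ∀ s, α < s → 0 < a s := fun s hs => by
    have := hFneg _ (hmin s hs)
    simp only [ha]; exact inv_pos.mpr (by linarith)
  have hac : ContinuousOn a (Ioi α) := by
    have : ContinuousOn (fun s => F (min s β)) (Ioi α) :=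
      hFc.comp (by fun_prop) (fun s hs => Ioc_subset_Icc_self (hmin s hs))
    exact this.neg.inv₀ (fun s hs => by
      have := hFneg _ (hmin s hs)
      exact (neg_pos.mpr this).ne')
  set G0 : ℝ → ℝ := fun x => ∫ s in x..β, a s with hG0
  have hG0d : ∀ x, α < x → HasDerivAt G0 (-(a x)) x := by
    intro x hx
    apply intervalIntegral.integral_hasDerivAt_left
    · apply ContinuousOn.intervalIntegrable
      apply hac.mono
      intro y hy
      rw [mem_uIcc] at hy
      rcases hy with hy | hy
      · exact lt_of_lt_of_le hx hy.1
      · exact lt_of_lt_of_le hab hy.1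
    · exact hac.stronglyMeasurableAtFilter isOpen_Ioi x hx
    · exact hac.continuousAt (Ioi_mem_nhds hx)
  have hG0c : ContinuousOn G0 (Ioi α) := fun x hx => (hG0d x hx).continuousAt.continuousWithinAt
  have hG0anti : StrictAntiOn G0 (Ioi α) := by
    apply strictAntiOn_of_deriv_neg (convex_Ioi α) hG0c
    intro x hx
    rw [interior_Ioi] at hx
    rw [(hG0d x hx).deriv]
    linarith [hapos x hx]
  have hG0β : G0 β = 0 := by simp [hG0]
  have hG0pos : ∀ x ∈ Ioo α β, 0 < G0 x := fun x hx => by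
    rw [← hG0β]; exact hG0anti hx.1 hab hx.2
  have hflow : ∀ x ∈ Ioo α β, ∀ t, 0 ≤ t → G0 (φ t x) = G0 x + t := by
    intro x hx t ht
    have hd : ∀ s, 0 ≤ s → HasDerivWithinAt (fun s => G0 (φ s x) - s) 0 (Ici 0) s := by
      intro s hs
      have h1 := hmem s hs x hx
      have h2 := (hG0d _ h1.1).comp_hasDerivWithinAt s (hode x hx s hs)
      have h3 := h2.sub (hasDerivWithinAt_id s (Ici 0))
      have h4 := hFneg _ ⟨h1.1, h1.2.le⟩
      have h5 : (0:ℝ) = -a (φ s x) * F (φ s x) - 1 := by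
        simp only [ha, min_eq_left h1.2.le]
        have := h4.ne
        rw [inv_neg, neg_neg, inv_mul_cancel₀ this, sub_self]
      rw [← h5] at h3
      exact h3
    have hc := constant_of_has_deriv_right_zero (f := fun s => G0 (φ s x) - s) (a := 0) (b := t)
      (fun s hs => ((hd s hs.1).continuousWithinAt).mono Icc_subset_Ici_self)
      (fun s hs => (hd s hs.1).mono (Ici_subset_Ici.mpr hs.1)) t ⟨ht, le_rfl⟩
    simp only [hφ0 x hx] at hc
    linarith
  have hsurj : ∀ u, 0 < u → ∃ x ∈ Ioo α β, G0 x = u := by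
    intro u hu
    obtain ⟨x0, hx0⟩ : (Ioo α β).Nonempty := nonempty_Ioo.mpr hab
    have h1 := hmem u hu.le x0 hx0
    have h2 := hflow x0 hx0 u hu.le
    have h3 := hG0pos x0 hx0
    have hiv := intermediate_value_Icc' (f := G0) h1.2.le
      (hG0c.mono (fun y hy => lt_of_lt_of_le h1.1 hy.1))
    obtain ⟨y, hy, hyu⟩ := hiv (show u ∈ Icc (G0 β) (G0 (φ u x0)) from
      ⟨by rw [hG0β]; exact hu.le, by linarith⟩)
    refine ⟨y, ⟨lt_of_lt_of_le h1.1 hy.1, lt_of_le_of_ne hy.2 ?_⟩, hyu⟩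
    rintro rfl
    linarith
  choose! H0 hH0m hH0 using hsurj
  have hinj : ∀ x ∈ Ioo α β, H0 (G0 x) = x := fun x hx =>
    hG0anti.injOn (hH0m _ (hG0pos x hx)).1 hx.1 (hH0 _ (hG0pos x hx))
  have hH0anti : StrictAntiOn H0 (Ioi 0) := by
    intro u hu u' hu' huu
    rw [← hG0anti.lt_iff_gt (hH0m u hu).1 (hH0m u' hu').1, hH0 u hu, hH0 u' hu']
    exact huu
  have himg : H0 '' Ioi 0 = Ioo α β := by
    ext x; constructor
    · rintro ⟨u, hu, rfl⟩; exact hH0m u hu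
    · intro hx; exact ⟨G0 x, hG0pos x hx, hinj x hx⟩
  have hH0ca : ∀ u, 0 < u → ContinuousAt H0 u := by
    intro u hu
    have : ContinuousAt (fun u => -H0 u) u := by
      apply continuousAt_of_monotoneOn_of_image_mem_nhds (s := Ioi 0)
      · intro x hx y hy hxy
        exact neg_le_neg (hH0anti.antitoneOn hx hy hxy)
      · exact Ioi_mem_nhds hu
      · have : (fun u => -H0 u) '' Ioi 0 = Ioo (-β) (-α) := by
          rw [← image_image (fun x => -x) H0, himg]; simp
        rw [this]
        have := hH0m u hu
        exact Ioo_mem_nhds (by linarith [this.2]) (by linarith [this.1])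
    have h9 := this.neg
    have h10 : (-fun u => -H0 u) = H0 := by ext; simp
    rwa [h10] at h9
  have hH0d : ∀ u, 0 < u → HasDerivAt H0 (F (H0 u)) u := by
    intro u hu
    have h1 := hH0m u hu
    have h2 := (hG0d (H0 u) h1.1).of_local_left_inverse (hH0ca u hu)
      (by linarith [hapos _ h1.1] : -(a (H0 u)) ≠ 0)
      (by filter_upwards [Ioi_mem_nhds hu] with y hy using hH0 y hy)
    have h3 : F (H0 u) = (-a (H0 u))⁻¹ := by
      simp [ha, min_eq_left h1.2.le, inv_neg]
    rw [h3]
    exact h2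
  have hH0c : ContinuousOn H0 (Ioi 0) := fun u hu => (hH0ca u hu).continuousWithinAt
  have hwc : ContinuousOn (fun u => -F (H0 u)) (Ioi 0) :=
    (hFc.comp hH0c (fun u hu => Ioo_subset_Icc_self (hH0m u hu))).neg
  classical
  refine ⟨(Ioi 0).piecewise H0 (fun _ => 0), (Ioo α β).piecewise G0 (fun _ => 0),
    (Ioi 0).piecewise (fun u => -F (H0 u)) (fun _ => 0), ?_, ?_, ?_, ?_⟩
  · exact hH0c.measurable_piecewise continuousOn_const measurableSet_Ioi
  · exact (hG0c.mono (fun x hx => hx.1)).measurable_piecewise continuousOn_const measurableSet_Ioo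
  · exact hwc.measurable_piecewise continuousOn_const measurableSet_Ioi
  have eH : ∀ u, 0 < u → (Ioi 0).piecewise H0 (fun _ => 0) u = H0 u := fun u hu =>
    piecewise_eq_of_mem _ _ _ hu
  have eW : ∀ u, 0 < u → (Ioi 0).piecewise (fun u => -F (H0 u)) (fun _ => 0) u = -F (H0 u) :=
    fun u hu => piecewise_eq_of_mem _ _ _ hu
  have eG : ∀ x ∈ Ioo α β, (Ioo α β).piecewise G0 (fun _ => 0) x = G0 x := fun x hx =>
    piecewise_eq_of_mem _ _ _ hx
  have hwpos : ∀ u, 0 < u → 0 < -F (H0 u) := fun u hu => by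
    have := hFneg _ (Ioo_subset_Ioc_self (hH0m u hu)); linarith
  refine ⟨fun u hu => by rw [eH u hu]; exact hH0m u hu, fun x hx => by rw [eG x hx]; exact hG0pos x hx,
    fun u hu => by rw [eH u hu, eG _ (hH0m u hu)]; exact hH0 u hu,
    fun x hx => by rw [eG x hx, eH _ (hG0pos x hx)]; exact hinj x hx, ?_, ?_, ?_, ?_, ?_⟩
  · intro u hu
    rw [eW u hu, neg_neg]
    apply (hH0d u hu).congr_of_eventuallyEq
    filter_upwards [Ioi_mem_nhds hu] with y hy using eH y hy
  · intro u hu; rw [eW u hu]; exact hwpos u hu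
  · intro u hu u' hu' huu
    rw [eW u hu, eW u' hu']
    exact neg_le_neg (hanti (Ioo_subset_Icc_self (hH0m u' hu')) (Ioo_subset_Icc_self (hH0m u hu))
      (hH0anti.antitoneOn hu hu' huu))
  · have hT : Tendsto H0 atTop (𝓝[Icc α β] α) := by
      apply tendsto_nhdsWithin_of_tendsto_nhds_of_eventually_within
      · rw [Metric.tendsto_atTop]
        intro ε hε
        obtain ⟨x, hx1, hx2⟩ := exists_between (show α < min β (α + ε) from lt_min hab (by linarith))
        have hx : x ∈ Ioo α β := ⟨hx1, lt_of_lt_of_le hx2 (min_le_left _ _)⟩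
        refine ⟨G0 x, fun u hu => ?_⟩
        have hu0 := lt_of_lt_of_le (hG0pos x hx) hu
        have h1 := hH0anti.antitoneOn (hG0pos x hx) hu0 hu
        rw [hinj x hx] at h1
        have h2 := hH0m u hu0
        have h3 := lt_of_lt_of_le hx2 (min_le_right _ _)
        rw [Real.dist_eq, abs_of_pos (by linarith [h2.1])]
        linarith
      · filter_upwards [eventually_gt_atTop 0] with u hu using Ioo_subset_Icc_self (hH0m u hu)
    have h1 := (hFc α ⟨le_rfl, hab.le⟩).tendsto.comp hT
    rw [hFα] at h1
    have h2 := h1.neg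
    rw [neg_zero] at h2
    apply h2.congr'
    filter_upwards [eventually_gt_atTop 0] with u hu using (eW u hu).symm
  · have hphi : ∀ t, 0 ≤ t → ∀ x ∈ Ioo α β, φ t x = H0 (G0 x + t) := by
      intro t ht x hx
      rw [← hflow x hx t ht, hinj _ (hmem t ht x hx)]
    intro t ht x hx
    have hg := hG0pos x hx
    rw [eG x hx, eH _ (by linarith), eW _ (by linarith), eW _ hg]
    refine ⟨hphi t ht x hx, ?_⟩
    have hI : (∫ s in (0:ℝ)..t, h (φ s x)) =
        -lam * Real.log (-F (H0 (G0 x + t))) - -lam * Real.log (-F (H0 (G0 x + 0))) := by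
      have hnn : ∀ s ∈ uIcc 0 t, 0 < G0 x + s := by
        intro s hs; rw [uIcc_of_le ht] at hs; linarith [hs.1]
      have hcongr : ∀ s ∈ uIcc 0 t, h (φ s x) = -lam * deriv F (H0 (G0 x + s)) := by
        intro s hs
        have hs0 : 0 ≤ s := by rw [uIcc_of_le ht] at hs; exact hs.1
        rw [hdef _ (Ioo_subset_Icc_self (hmem s hs0 x hx)), hphi s hs0 x hx]
      rw [intervalIntegral.integral_congr hcongr]
      apply intervalIntegral.integral_eq_sub_of_hasDerivAt
        (f := fun s => -lam * Real.log (-F (H0 (G0 x + s))))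
      · intro s hs
        have h1 := hnn s hs
        have h2 : HasDerivAt (fun s => H0 (G0 x + s)) (F (H0 (G0 x + s))) s := by
          simpa using (hH0d _ h1).comp_const_add (G0 x) s
        have h3 := ((hFd _ (hH0m _ h1)).comp s h2).neg
        have h4 := (h3.log (hwpos _ h1).ne').const_mul (-lam)
        have := (hwpos _ h1).ne'
        have h5 : F (H0 (G0 x + s)) ≠ 0 := fun h => this (by rw [h]; simp)
        have h6 : -lam * deriv F (H0 (G0 x + s)) = -lam * (-(deriv F (H0 (G0 x + s)) *
            F (H0 (G0 x + s))) / (-F (H0 (G0 x + s)))) := by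
          field_simp
        rw [h6]
        exact h4
      · apply ContinuousOn.intervalIntegrable
        apply ContinuousOn.mul continuousOn_const
        apply hFdc.comp
        · apply hH0c.comp (by fun_prop) (fun s hs => hnn s hs)
        · intro s hs; exact hH0m _ (hnn s hs)
    rw [hI, add_zero, Real.rpow_def_of_pos (hwpos _ (by linarith)), Real.rpow_def_of_pos (hwpos _ hg),
      ← Real.exp_add]
    congr 1; ring

open scoped ENNReal

lemma dense_family (p : ℝ) (hp : 1 ≤ p) (V : ℝ → ℝ≥0∞) (hV : Measurable V) :
    ∃ d : ℕ → ℝ → ℝ, (∀ i, Measurable (d i)) ∧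
      (∀ i, ∫⁻ u in Ioi (0:ℝ), V u * ‖d i u‖ₑ ^ p ≠ ∞) ∧
      ∀ g : ℝ → ℝ, Measurable g → ∫⁻ u in Ioi (0:ℝ), V u * ‖g u‖ₑ ^ p ≠ ∞ →
        ∀ ε : ℝ≥0∞, 0 < ε → ∃ i, ∫⁻ u in Ioi (0:ℝ), V u * ‖d i u - g u‖ₑ ^ p < ε := by
  have hp0 : 0 < p := by linarith
  set ν : Measure ℝ := (volume.restrict (Ioi (0:ℝ))).withDensity V with hν
  set P : ℝ≥0∞ := ENNReal.ofReal p with hP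
  have hP0 : P ≠ 0 := by simp [hP, hp0]
  have hPt : P ≠ ∞ := by simp [hP]
  have hPr : P.toReal = p := ENNReal.toReal_ofReal hp0.le
  have : Fact (1 ≤ P) := ⟨by simpa [hP] using hp⟩
  have : Fact (P ≠ ∞) := ⟨hPt⟩
  have key : ∀ f : ℝ → ℝ, Measurable f →
      ∫⁻ u in Ioi (0:ℝ), V u * ‖f u‖ₑ ^ p = (eLpNorm f P ν) ^ p := by
    intro f hf
    rw [eLpNorm_eq_lintegral_rpow_enorm_toReal hP0 hPt, hPr, ← ENNReal.rpow_mul, one_div,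
      inv_mul_cancel₀ hp0.ne', ENNReal.rpow_one, hν,
      lintegral_withDensity_eq_lintegral_mul _ hV (by fun_prop)]
    rfl
  let D : ℕ → Lp ℝ P ν := TopologicalSpace.denseSeq (Lp ℝ P ν)
  have hD : DenseRange D := TopologicalSpace.denseRange_denseSeq _
  refine ⟨fun i => (D i : ℝ → ℝ), fun i => (Lp.stronglyMeasurable _).measurable, ?_, ?_⟩
  · intro i
    rw [key _ (Lp.stronglyMeasurable _).measurable]
    exact ENNReal.rpow_ne_top_of_nonneg hp0.le (Lp.eLpNorm_ne_top _)
  · intro g hg hgf ε hε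
    have hgm : MemLp g P ν := by
      refine ⟨hg.aestronglyMeasurable, ?_⟩
      rw [key g hg] at hgf
      by_contra hc
      rw [not_lt, top_le_iff] at hc
      rw [hc, ENNReal.top_rpow_of_pos hp0] at hgf
      exact hgf rfl
    have hε' : 0 < ε ^ (1/p) := ENNReal.rpow_pos_of_nonneg hε (by positivity)
    obtain ⟨i, hi⟩ := hD.exists_mem_open (s := Metric.eball (hgm.toLp g) (ε ^ (1/p)))
      Metric.isOpen_eball ⟨_, Metric.mem_eball_self hε'⟩
    refine ⟨i, ?_⟩
    rw [key (fun u => (D i : ℝ → ℝ) u - g u) ((Lp.stronglyMeasurable _).measurable.sub hg)]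
    rw [Metric.mem_eball, Lp.edist_def] at hi
    have h2 : eLpNorm (fun u => (D i : ℝ → ℝ) u - g u) P ν < ε ^ (1/p) := by
      refine lt_of_eq_of_lt (eLpNorm_congr_ae ?_) hi
      filter_upwards [hgm.coeFn_toLp] with u hu
      simp [hu]
    calc _ < (ε ^ (1/p)) ^ p := ENNReal.rpow_lt_rpow h2 hp0
      _ = ε := by rw [← ENNReal.rpow_mul, one_div, inv_mul_cancel₀ hp0.ne', ENNReal.rpow_one]

lemma enorm_sub_rpow_le (p : ℝ) (hp : 1 ≤ p) (a b c : ℝ) :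
    ‖a - b‖ₑ ^ p ≤ 2 ^ p * (‖a - c‖ₑ ^ p + ‖c - b‖ₑ ^ p) := by
  have h1 : ‖a - b‖ₑ ≤ ‖a - c‖ₑ + ‖c - b‖ₑ := by
    have := enorm_add_le (a - c) (c - b)
    simpa using this
  calc ‖a - b‖ₑ ^ p ≤ (‖a - c‖ₑ + ‖c - b‖ₑ) ^ p := ENNReal.rpow_le_rpow h1 (by linarith)
    _ ≤ 2 ^ (p - 1) * (‖a - c‖ₑ ^ p + ‖c - b‖ₑ ^ p) := ENNReal.rpow_add_le_mul_rpow_add_rpow _ _ hp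
    _ ≤ _ := by
      gcongr
      · norm_num
      · linarith

lemma lint_sub_le (p : ℝ) (hp : 1 ≤ p) (V : ℝ → ℝ≥0∞) (hV : Measurable V) (μ : Measure ℝ)
    (a b c : ℝ → ℝ) (ha : Measurable a) (hb : Measurable b) (hc : Measurable c) :
    ∫⁻ u, V u * ‖a u - b u‖ₑ ^ p ∂μ ≤ 2 ^ p * (∫⁻ u, V u * ‖a u - c u‖ₑ ^ p ∂μ
      + ∫⁻ u, V u * ‖c u - b u‖ₑ ^ p ∂μ) := by
  rw [← lintegral_add_left (by fun_prop), ← lintegral_const_mul _ (by fun_prop)]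
  apply lintegral_mono
  intro u
  calc V u * ‖a u - b u‖ₑ ^ p ≤ V u * (2 ^ p * (‖a u - c u‖ₑ ^ p + ‖c u - b u‖ₑ ^ p)) := by
        gcongr; exact enorm_sub_rpow_le p hp _ _ _
    _ = _ := by ring

lemma tail_tendsto (m : ℝ → ℝ≥0∞) (hm : Measurable m) (hfin : ∫⁻ u in Ioi (0:ℝ), m u ≠ ∞) :
    Tendsto (fun r : ℝ => ∫⁻ u in Ioi r, m u) atTop (𝓝 0) := by
  have h1 : Tendsto (fun r : ℝ => ∫⁻ u in Ioi (0:ℝ), (Ioi r).indicator m u) atTop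
      (𝓝 (∫⁻ u in Ioi (0:ℝ), 0)) := by
    apply tendsto_lintegral_filter_of_dominated_convergence m
    · exact Eventually.of_forall fun r => hm.indicator measurableSet_Ioi
    · exact Eventually.of_forall fun r => Eventually.of_forall fun u =>
        indicator_le_self _ _ _
    · exact hfin
    · refine Eventually.of_forall fun u => ?_
      apply tendsto_const_nhds.congr'
      filter_upwards [eventually_ge_atTop u] with r hr
      rw [indicator_of_notMem]; simpa using hr
  simp only [lintegral_zero] at h1
  apply h1.congr'
  filter_upwards [eventually_ge_atTop 0] with r hr
  rw [lintegral_indicator measurableSet_Ioi, Measure.restrict_restrict measurableSet_Ioi,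
    inter_eq_left.mpr (Ioi_subset_Ioi hr)]

lemma shift_tendsto (V : ℝ → ℝ≥0∞) (hV : Measurable V) (hVa : AntitoneOn V (Ioi 0))
    (hV0 : Tendsto V atTop (𝓝 0)) (m : ℝ → ℝ≥0∞) (hm : Measurable m) (hmt : ∀ u, m u ≠ ∞)
    (hfin : ∫⁻ u in Ioi (0:ℝ), V u * m u ≠ ∞) :
    Tendsto (fun r : ℝ => ∫⁻ u in Ioi (0:ℝ), V (u + r) * m u) atTop (𝓝 0) := by
  have h1 : Tendsto (fun r : ℝ => ∫⁻ u in Ioi (0:ℝ), V (u + r) * m u) atTop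
      (𝓝 (∫⁻ u in Ioi (0:ℝ), 0)) := by
    apply tendsto_lintegral_filter_of_dominated_convergence (fun u => V u * m u)
    · exact Eventually.of_forall fun r => by fun_prop
    · filter_upwards [eventually_ge_atTop 0] with r hr
      filter_upwards [ae_restrict_mem measurableSet_Ioi] with u hu
      have hu' : (0:ℝ) < u := hu
      gcongr
      exact hVa hu (show (0:ℝ) < u + r by linarith) (by linarith)
    · exact hfin
    · refine Eventually.of_forall fun u => ?_
      have h2 : Tendsto (fun r => V (u + r)) atTop (𝓝 0) :=
        hV0.comp (tendsto_atTop_add_const_left _ _ tendsto_id)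
      simpa using ENNReal.Tendsto.mul_const h2 (Or.inr (hmt u))
  simpa using h1

lemma shift_set (m : ℝ → ℝ≥0∞) (a b c : ℝ) :
    ∫⁻ u in Ioc (a - c) (b - c), m (u + c) = ∫⁻ u in Ioc a b, m u := by
  have h1 := (measurePreserving_add_right volume c).setLIntegral_comp_preimage_emb
    (measurableEmbedding_addRight c) m (Ioc a b)
  rw [← h1]; simp

lemma shift_Ioi (m : ℝ → ℝ≥0∞) (a c : ℝ) :
    ∫⁻ u in Ioi (a - c), m (u + c) = ∫⁻ u in Ioi a, m u := by
  have h1 := (measurePreserving_add_right volume c).setLIntegral_comp_preimage_emb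
    (measurableEmbedding_addRight c) m (Ioi a)
  rw [← h1]; simp

lemma geom_small (C : ℝ≥0∞) (hC : C ≠ ∞) :
    Tendsto (fun n : ℕ => C * (2⁻¹ : ℝ≥0∞) ^ n) atTop (𝓝 0) := by
  have := ENNReal.tendsto_pow_atTop_nhds_zero_of_lt_one
    (show (2⁻¹ : ℝ≥0∞) < 1 by simp)
  simpa using ENNReal.Tendsto.const_mul this (Or.inr hC)

theorem translation_hyper (p : ℝ) (hp : 1 ≤ p) (V : ℝ → ℝ≥0∞) (hV : Measurable V)
    (hVa : AntitoneOn V (Ioi 0)) (hV0 : Tendsto V atTop (𝓝 0)) :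
    ∃ k : ℝ → ℝ, Measurable k ∧ ∫⁻ u in Ioi (0:ℝ), V u * ‖k u‖ₑ ^ p ≠ ∞ ∧
      ∀ g : ℝ → ℝ, Measurable g → ∫⁻ u in Ioi (0:ℝ), V u * ‖g u‖ₑ ^ p ≠ ∞ →
        ∀ ε : ℝ≥0∞, 0 < ε → ∀ T0 : ℝ, ∃ t, T0 ≤ t ∧ 0 ≤ t ∧
          ∫⁻ u in Ioi (0:ℝ), V u * ‖k (u + t) - g u‖ₑ ^ p < ε := by
  have hp0 : 0 < p := by linarith
  obtain ⟨d, hdm, hdf, hdd⟩ := dense_family p hp V hV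
  set g : ℕ → ℝ → ℝ := fun n => d (Nat.unpair n).1 with hg
  have hgm : ∀ n, Measurable (g n) := fun n => hdm _
  have hgf : ∀ n, ∫⁻ u in Ioi (0:ℝ), V u * ‖g n u‖ₑ ^ p ≠ ∞ := fun n => hdf _
  have hpn : ∀ n : ℕ, (0 : ℝ≥0∞) < 2⁻¹ ^ n := fun n => by
    apply ENNReal.pow_pos; simp
  have hδ : ∀ n, ∃ δ : ℝ, 1 ≤ δ ∧ ∫⁻ u in Ioi δ, V u * ‖g n u‖ₑ ^ p < 2⁻¹ ^ n ∧
      ∫⁻ u in Ioi (0:ℝ), V (u + δ) * ‖g (n + 1) u‖ₑ ^ p < 2⁻¹ ^ n := by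
    intro n
    have h1 := tail_tendsto (fun u => V u * ‖g n u‖ₑ ^ p) (by have := hgm n; fun_prop) (hgf n)
    have h2 := shift_tendsto V hV hVa hV0 (fun u => ‖g (n+1) u‖ₑ ^ p)
      (by have := hgm (n+1); fun_prop)
      (fun u => ENNReal.rpow_ne_top_of_nonneg hp0.le enorm_ne_top) (hgf (n+1))
    exact ((eventually_ge_atTop 1).and (((tendsto_order.1 h1).2 _ (hpn n)).and
      ((tendsto_order.1 h2).2 _ (hpn n)))).exists
  choose δ hδ1 hδa hδb using hδ
  set t : ℕ → ℝ := fun n => ∑ i ∈ Finset.range n, δ i with ht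
  have ht0 : t 0 = 0 := by simp [ht]
  have hts : ∀ n, t (n + 1) = t n + δ n := fun n => by simp [ht, Finset.sum_range_succ]
  have htmono : StrictMono t := strictMono_nat_of_lt_succ (fun n => by rw [hts]; linarith [hδ1 n])
  have htn : ∀ n : ℕ, (n : ℝ) ≤ t n := by
    intro n
    induction n with
    | zero => simp [ht0]
    | succ n ih => rw [hts]; push_cast; linarith [hδ1 n]
  have hdisj : Pairwise fun i j => Disjoint (Ioc (t i) (t (i+1))) (Ioc (t j) (t (j+1))) := by
    exact htmono.monotone.pairwise_disjoint_on_Ioc_succ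
  have hcover : ∀ u, 0 < u → ∃ m, u ∈ Ioc (t m) (t (m+1)) := by
    intro u hu
    have hex : ∃ n, u ≤ t n := by
      obtain ⟨n, hn⟩ := exists_nat_ge u
      exact ⟨n, hn.trans (htn n)⟩
    classical
    have h1 := Nat.find_spec hex
    have h2 : Nat.find hex ≠ 0 := fun h0 => by rw [h0, ht0] at h1; linarith
    obtain ⟨m, hm⟩ := Nat.exists_eq_succ_of_ne_zero h2
    refine ⟨m, ?_, by rw [hm] at h1; exact h1⟩
    have := Nat.find_min hex (m := m) (by omega)
    exact not_le.mp this
  obtain ⟨k, hkm, hk⟩ := exists_measurable_piecewise (fun n => Ioc (t n) (t (n+1)))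
    (fun n => measurableSet_Ioc) (fun n u => g n (u - t n))
    (fun n => (hgm n).comp (measurable_id.sub_const _))
    (fun i j hij => by
      show EqOn _ _ (Ioc (t i) (t (i+1)) ∩ Ioc (t j) (t (j+1)))
      rw [(hdisj hij).inter_eq]; exact fun x hx => hx.elim)
  -- the pieces
  have hpiece : ∀ n j : ℕ, ∫⁻ u in Ioc (t (n+1+j) - t n) (t (n+1+j+1) - t n),
      V u * ‖k (u + t n)‖ₑ ^ p ≤ 2⁻¹ ^ (n + j) := by
    intro n j
    have e1 : ∫⁻ u in Ioc (t (n+1+j) - t n) (t (n+1+j+1) - t n), V u * ‖k (u + t n)‖ₑ ^ p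
        = ∫⁻ u in Ioc (t (n+1+j) - t n) (t (n+1+j+1) - t n),
          V (u + (t n - t (n+1+j)) + (t (n+1+j) - t n)) * ‖g (n+1+j) (u + (t n - t (n+1+j)))‖ₑ ^ p := by
      apply setLIntegral_congr_fun measurableSet_Ioc
      intro u hu
      have h1 := hk (n+1+j) (show u + t n ∈ Ioc (t (n+1+j)) (t (n+1+j+1)) from
        ⟨by linarith [hu.1], by linarith [hu.2]⟩)
      simp only at h1 ⊢
      rw [h1]
      congr 2
      · ring
      · congr 3; ring
    have e2 := shift_set (fun s => V (s + (t (n+1+j) - t n)) * ‖g (n+1+j) s‖ₑ ^ p)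
      0 (δ (n+1+j)) (t n - t (n+1+j))
    have e3 : (0:ℝ) - (t n - t (n+1+j)) = t (n+1+j) - t n := by ring
    have e4 : δ (n+1+j) - (t n - t (n+1+j)) = t (n+1+j+1) - t n := by rw [hts]; ring
    rw [e3, e4] at e2
    rw [e1, e2]
    have hidx : n + 1 + j = (n + j) + 1 := by ring
    have hge : δ (n+j) ≤ t (n+1+j) - t n := by
      rw [hidx, hts]; linarith [htmono.monotone (show n ≤ n + j by omega)]
    calc _ ≤ ∫⁻ u in Ioi (0:ℝ), V (u + (t (n+1+j) - t n)) * ‖g (n+1+j) u‖ₑ ^ p :=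
          lintegral_mono_set Ioc_subset_Ioi_self
      _ ≤ ∫⁻ u in Ioi (0:ℝ), V (u + δ (n+j)) * ‖g (n+1+j) u‖ₑ ^ p := by
          apply setLIntegral_mono' measurableSet_Ioi
          intro u hu
          have hu' : (0:ℝ) < u := hu
          have := hδ1 (n+j)
          gcongr
          exact hVa (show (0:ℝ) < _ by linarith) (show (0:ℝ) < _ by linarith) (by linarith)
      _ ≤ _ := by
          have := (hδb (n+j)).le
          rwa [← hidx] at this
  have htail : ∀ n, ∫⁻ u in Ioi (δ n), V u * ‖k (u + t n)‖ₑ ^ p ≤ 2 * 2⁻¹ ^ n := by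
    intro n
    have hsub : Ioi (δ n) ⊆ ⋃ j : ℕ, Ioc (t (n+1+j) - t n) (t (n+1+j+1) - t n) := by
      intro u hu
      have hu' : δ n < u := hu
      have := hδ1 n
      have h0 := htn n
      have hn0 : (0:ℝ) ≤ n := Nat.cast_nonneg n
      obtain ⟨m, hm⟩ := hcover (u + t n) (by linarith)
      have hlt : n + 1 < m + 1 := by
        apply htmono.lt_iff_lt.mp
        rw [hts]; linarith [hm.2]
      obtain ⟨j, rfl⟩ : ∃ j, m = n + 1 + j := ⟨m - (n+1), by omega⟩
      exact mem_iUnion.mpr ⟨j, by linarith [hm.1], by linarith [hm.2]⟩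
    calc _ ≤ ∫⁻ u in ⋃ j : ℕ, Ioc (t (n+1+j) - t n) (t (n+1+j+1) - t n), V u * ‖k (u + t n)‖ₑ ^ p :=
          lintegral_mono_set hsub
      _ ≤ ∑' j : ℕ, ∫⁻ u in Ioc (t (n+1+j) - t n) (t (n+1+j+1) - t n), V u * ‖k (u + t n)‖ₑ ^ p :=
          lintegral_iUnion_le _ _
      _ ≤ ∑' j : ℕ, (2⁻¹ : ℝ≥0∞) ^ n * 2⁻¹ ^ j := by
          apply ENNReal.tsum_le_tsum
          intro j; rw [← pow_add]; exact hpiece n j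
      _ = _ := by
          rw [ENNReal.tsum_mul_left, ENNReal.tsum_geometric, ENNReal.one_sub_inv_two, inv_inv, mul_comm]
  have hclose : ∀ n, ∫⁻ u in Ioi (0:ℝ), V u * ‖k (u + t n) - g n u‖ₑ ^ p ≤
      (2 ^ p * 3) * 2⁻¹ ^ n := by
    intro n
    have hun : Ioi (0:ℝ) = Ioc 0 (δ n) ∪ Ioi (δ n) :=
      (Ioc_union_Ioi_eq_Ioi (by linarith [hδ1 n])).symm
    have hz : ∫⁻ u in Ioc 0 (δ n), V u * ‖k (u + t n) - g n u‖ₑ ^ p = 0 := by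
      rw [← lintegral_zero (μ := volume.restrict (Ioc 0 (δ n)))]
      apply setLIntegral_congr_fun measurableSet_Ioc
      intro u hu
      have h1 := hk n (show u + t n ∈ Ioc (t n) (t (n+1)) from
        ⟨by linarith [hu.1], by rw [hts]; linarith [hu.2]⟩)
      simp only at h1 ⊢
      rw [h1, add_sub_cancel_right, sub_self, enorm_zero, ENNReal.zero_rpow_of_pos hp0, mul_zero]
    have hgn := hgm n
    have h3 := lint_sub_le p hp V hV (volume.restrict (Ioi (δ n))) (fun u => k (u + t n)) (g n)
      (fun _ => 0) (by fun_prop) hgn (by fun_prop)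
    simp only [sub_zero, zero_sub, enorm_neg] at h3
    calc _ ≤ (∫⁻ u in Ioc 0 (δ n), V u * ‖k (u + t n) - g n u‖ₑ ^ p) +
          ∫⁻ u in Ioi (δ n), V u * ‖k (u + t n) - g n u‖ₑ ^ p := by
          rw [hun]; exact lintegral_union_le _ _ _
      _ ≤ 2 ^ p * (2 * 2⁻¹ ^ n + 2⁻¹ ^ n) := by
          rw [hz, zero_add]
          refine h3.trans ?_
          gcongr
          · exact htail n
          · exact (hδa n).le
      _ = _ := by ring
  have h2p : (2:ℝ≥0∞) ^ p ≠ ∞ := ENNReal.rpow_ne_top_of_nonneg hp0.le (by simp)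
  refine ⟨k, hkm, ?_, ?_⟩
  · have h3 := lint_sub_le p hp V hV (volume.restrict (Ioi 0)) k (fun _ => 0) (g 0)
      hkm (by fun_prop) (hgm 0)
    simp only [sub_zero] at h3
    have h4 := hclose 0
    simp only [ht0, add_zero, pow_zero, mul_one] at h4
    refine ne_top_of_le_ne_top ?_ h3
    apply ENNReal.mul_ne_top h2p
    apply ENNReal.add_ne_top.mpr ⟨ne_top_of_le_ne_top ?_ h4, hgf 0⟩
    exact ENNReal.mul_ne_top h2p (by simp)
  · intro f hfm hff ε hε T0
    set ε' : ℝ≥0∞ := ε / (2 ^ p * 2) with hε'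
    have hε'0 : 0 < ε' := ENNReal.div_pos hε.ne' (ENNReal.mul_ne_top h2p (by simp))
    obtain ⟨i, hi⟩ := hdd f hfm hff ε' hε'0
    have hsm := (tendsto_order.1 (geom_small (2 ^ p * 3) (ENNReal.mul_ne_top h2p (by simp)))).2 ε' hε'0
    obtain ⟨N, hN⟩ := eventually_atTop.1 hsm
    obtain ⟨N', hN'⟩ := exists_nat_ge T0
    set n := Nat.pair i (max N N') with hn
    have hnge : max N N' ≤ n := Nat.right_le_pair _ _
    have hgn : g n = d i := by simp [hg, hn]
    have hnN' : (N':ℝ) ≤ n := by exact_mod_cast (le_max_right _ _).trans hnge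
    have htnn := htn n
    refine ⟨t n, by linarith, by have : (0:ℝ) ≤ n := Nat.cast_nonneg n; linarith, ?_⟩
    have hgn' := hgm n
    have h3 := lint_sub_le p hp V hV (volume.restrict (Ioi 0)) (fun u => k (u + t n)) f (g n)
      (by fun_prop) hfm hgn'
    have h5 := (hclose n).trans_lt (hN n ((le_max_left _ _).trans hnge))
    rw [← hgn] at hi
    refine lt_of_le_of_lt h3 ?_
    have h2p0 : (2:ℝ≥0∞) ^ p ≠ 0 := by simp
    calc _ < 2 ^ p * (ε' + ε') :=
          ENNReal.mul_lt_mul_right h2p0 h2p (ENNReal.add_lt_add h5 hi)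
      _ = (2 ^ p * 2) * ε' := by ring
      _ ≤ ε := ENNReal.mul_div_le

lemma enorm_abs_rpow (p : ℝ) (hp : 1 ≤ p) (y : ℝ) : ‖|y| ^ p‖ₑ = ‖y‖ₑ ^ p := by
  rw [Real.enorm_rpow_of_nonneg (abs_nonneg y) (by linarith), Real.enorm_abs]

lemma integrableOn_iff_ne_top (p : ℝ) (hp : 1 ≤ p) (f : ℝ → ℝ) (hf : Measurable f) (s : Set ℝ) :
    IntegrableOn (fun x => |f x| ^ p) s ↔ ∫⁻ x in s, ‖f x‖ₑ ^ p ≠ ∞ := by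
  have hm : Measurable (fun x => |f x| ^ p) := by fun_prop
  unfold IntegrableOn Integrable HasFiniteIntegral
  simp only [enorm_abs_rpow p hp, lt_top_iff_ne_top]
  exact ⟨fun h => h.2, fun h => ⟨hm.aestronglyMeasurable, h⟩⟩

lemma integral_eq_toReal (p : ℝ) (hp : 1 ≤ p) (f : ℝ → ℝ) (hf : Measurable f) (s : Set ℝ) :
    ∫ x in s, |f x| ^ p = (∫⁻ x in s, ‖f x‖ₑ ^ p).toReal := by
  have hm : Measurable (fun x => |f x| ^ p) := by fun_prop
  rw [integral_eq_lintegral_of_nonneg_ae (Eventually.of_forall fun x => by positivity)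
    hm.aestronglyMeasurable]
  congr 1
  apply lintegral_congr
  intro x
  rw [← enorm_abs_rpow p hp, Real.enorm_of_nonneg (by positivity)]

theorem stmt16 (α β p lam : ℝ) (hab : α < β) (hp : 1 ≤ p)
    (F : ℝ → ℝ) (hF : ContDiffOn ℝ 1 F (Icc α β))
    (hanti : AntitoneOn F (Icc α β)) (hFα : F α = 0)
    (hFneg : ∀ x ∈ Ioc α β, F x < 0)
    (φ : ℝ → ℝ → ℝ)
    (hφ0 : ∀ x ∈ Ioo α β, φ 0 x = x)
    (hmem : ∀ t : ℝ, 0 ≤ t → ∀ x ∈ Ioo α β, φ t x ∈ Ioo α β)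
    (hode : ∀ x ∈ Ioo α β, ∀ t : ℝ, 0 ≤ t →
      HasDerivWithinAt (fun s => φ s x) (F (φ t x)) (Ici 0) t)
    (hleave : ∀ x ∈ Ioo α β, ∃ tb : ℝ, 0 < tb ∧ x ∉ φ tb '' Ioo α β)
    (h : ℝ → ℝ) (hdef : ∀ x ∈ Icc α β, h x = -lam * deriv F x)
    (hadm : ∃ M ω : ℝ, 1 ≤ M ∧ ∀ t : ℝ, 0 ≤ t →
      ∀ᵐ x ∂(volume.restrict (Ioo α β)),
        |Real.exp (∫ s in (0:ℝ)..t, h (φ s x))| ^ p ≤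
          M * Real.exp (ω * t) * |deriv (φ t) x|) :
    (StableLp α β p h φ ↔ ¬ HypercyclicLp α β p h φ) ∧
    (StableLp α β p h φ ↔ lam ≤ -(1 / p)) := by
  have hp0 : 0 < p := by linarith
  obtain ⟨H, G, w, hHm, hGm, hwm, hHmem, hGpos, hGH, hHG, hHd, hwpos, hwanti, hw0, hflow⟩ :=
    flow_struct α β lam hab F hF hanti hFα hFneg φ hφ0 hmem hode h hdef
  set Tm : ℝ → (ℝ → ℝ) → ℝ → ℝ := fun t f x =>
    (w (G x + t) ^ (-lam) * w (G x) ^ lam) * f (H (G x + t)) with hTm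
  have hT : ∀ t, 0 ≤ t → ∀ f : ℝ → ℝ, ∀ x ∈ Ioo α β, Tapp h φ t f x = Tm t f x := by
    intro t ht f x hx
    obtain ⟨h1, h2⟩ := hflow t ht x hx
    simp only [Tapp, hTm, h2, h1]
  have hTmm : ∀ t f, Measurable f → Measurable (Tm t f) := by
    intro t f hf
    simp only [hTm]
    fun_prop
  have himg : H '' Ioi 0 = Ioo α β := by
    ext x; constructor
    · rintro ⟨u, hu, rfl⟩; exact hHmem u hu
    · intro hx; exact ⟨G x, hGpos x hx, hHG x hx⟩
  have hcov : ∀ m : ℝ → ℝ≥0∞, ∫⁻ x in Ioo α β, m x =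
      ∫⁻ u in Ioi (0:ℝ), ENNReal.ofReal (w u) * m (H u) := by
    intro m
    have h1 := lintegral_image_eq_lintegral_abs_deriv_mul (s := Ioi (0:ℝ)) (f := H)
      (f' := fun u => -(w u)) measurableSet_Ioi (fun u hu => (hHd u hu).hasDerivWithinAt)
      (fun u hu u' hu' he => by rw [← hGH u hu, ← hGH u' hu', he]) m
    rw [himg] at h1
    rw [h1]
    apply setLIntegral_congr_fun measurableSet_Ioi
    intro u hu
    simp only [abs_neg, abs_of_pos (hwpos u hu)]
  set q : ℝ := lam * p + 1 with hq
  set V : ℝ → ℝ≥0∞ := fun u => ENNReal.ofReal (w u ^ q) with hVdef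
  have hVm : Measurable V := by simp only [hVdef]; fun_prop
  set E : (ℝ → ℝ) → ℝ → ℝ := fun f u => w u ^ (-lam) * f (H u) with hE
  have hEm : ∀ f, Measurable f → Measurable (E f) := by
    intro f hf
    simp only [hE]; fun_prop
  have hpt : ∀ u, 0 < u → ∀ a : ℝ, ENNReal.ofReal (w u) * ‖w u ^ lam * a‖ₑ ^ p = V u * ‖a‖ₑ ^ p := by
    intro u hu a
    have hw := hwpos u hu
    have hwl : 0 < w u ^ lam := Real.rpow_pos_of_pos hw _
    rw [enorm_mul, ENNReal.mul_rpow_of_nonneg _ _ hp0.le, ← mul_assoc]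
    congr 1
    rw [Real.enorm_of_nonneg hwl.le, ENNReal.ofReal_rpow_of_pos hwl, ← ENNReal.ofReal_mul hw.le,
      ← Real.rpow_mul hw.le]
    simp only [hVdef, hq]
    rw [Real.rpow_add hw, Real.rpow_one, mul_comm]
  have hback : ∀ u, 0 < u → ∀ y : ℝ, w u ^ lam * (w u ^ (-lam) * y) = y := by
    intro u hu y
    rw [← mul_assoc, ← Real.rpow_add (hwpos u hu)]; simp
  have key1 : ∀ t, 0 ≤ t → ∀ f g : ℝ → ℝ, ∫⁻ x in Ioo α β, ‖Tm t f x - g x‖ₑ ^ p =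
      ∫⁻ u in Ioi (0:ℝ), V u * ‖E f (u + t) - E g u‖ₑ ^ p := by
    intro t ht f g
    rw [hcov]
    apply setLIntegral_congr_fun measurableSet_Ioi
    intro u hu
    simp only
    rw [← hpt u hu]
    congr 3
    simp only [hTm, hE, hGH u hu]
    rw [mul_sub, hback u hu]
    ring
  have key0 : ∀ g : ℝ → ℝ, ∫⁻ x in Ioo α β, ‖g x‖ₑ ^ p =
      ∫⁻ u in Ioi (0:ℝ), V u * ‖E g u‖ₑ ^ p := by
    intro g
    rw [hcov]
    apply setLIntegral_congr_fun measurableSet_Ioi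
    intro u hu
    simp only
    rw [← hpt u hu]
    congr 3
    simp only [hE]
    rw [hback u hu]
  have key2 : ∀ t, 0 ≤ t → ∀ f : ℝ → ℝ, ∫⁻ x in Ioo α β, ‖Tm t f x‖ₑ ^ p =
      ∫⁻ u in Ioi (0:ℝ), V u * ‖E f (u + t)‖ₑ ^ p := by
    intro t ht f
    have := key1 t ht f (fun _ => 0)
    simpa [hE] using this
  have hsub : ∀ a b c : ℝ → ℝ, Measurable a → Measurable b → Measurable c →
      ∫⁻ x in Ioo α β, ‖a x - b x‖ₑ ^ p ≤ 2 ^ p * ((∫⁻ x in Ioo α β, ‖a x - c x‖ₑ ^ p) +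
        ∫⁻ x in Ioo α β, ‖c x - b x‖ₑ ^ p) := by
    intro a b c ha hb hc
    simpa using lint_sub_le p hp (fun _ => 1) (by fun_prop) (volume.restrict (Ioo α β)) a b c ha hb hc
  have h2p : (2:ℝ≥0∞) ^ p ≠ ∞ := ENNReal.rpow_ne_top_of_nonneg hp0.le (by simp)
  have hconst : ∀ C : ℝ, 0 ≤ C → ∫⁻ x in Ioo α β, ‖(fun _ => C : ℝ → ℝ) x‖ₑ ^ p =
      ENNReal.ofReal (C ^ p * (β - α)) := by
    intro C hC
    simp only [lintegral_const, Measure.restrict_apply_univ, Real.volume_Ioo]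
    rw [Real.enorm_of_nonneg hC, ENNReal.ofReal_rpow_of_nonneg hC hp0.le,
      ENNReal.ofReal_mul (by positivity)]
  have h2pr : (2:ℝ≥0∞) ^ p = ENNReal.ofReal (2 ^ p) := by
    rw [← ENNReal.ofReal_rpow_of_pos (by norm_num)]; simp
  have intT : ∀ t, 0 ≤ t → ∀ f : ℝ → ℝ, Measurable f → ∫ x in Ioo α β, |Tapp h φ t f x| ^ p =
      (∫⁻ x in Ioo α β, ‖Tm t f x‖ₑ ^ p).toReal := by
    intro t ht f hf
    rw [← integral_eq_toReal p hp _ (hTmm t f hf)]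
    apply setIntegral_congr_fun measurableSet_Ioo
    intro x hx
    simp only [hT t ht f x hx]
  have intTg : ∀ t, 0 ≤ t → ∀ f g : ℝ → ℝ, Measurable f → Measurable g →
      ∫ x in Ioo α β, |Tapp h φ t f x - g x| ^ p =
      (∫⁻ x in Ioo α β, ‖Tm t f x - g x‖ₑ ^ p).toReal := by
    intro t ht f g hf hg
    rw [← integral_eq_toReal p hp (fun x => Tm t f x - g x) ((hTmm t f hf).sub hg)]
    apply setIntegral_congr_fun measurableSet_Ioo
    intro x hx
    simp only [hT t ht f x hx]
  have hA : lam ≤ -(1 / p) → StableLp α β p h φ ∧ ¬ HypercyclicLp α β p h φ := by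
    intro hl
    have hq0 : q ≤ 0 := by
      have h1 := mul_le_mul_of_nonneg_right hl hp0.le
      have h2 : -(1 / p) * p = -1 := by field_simp
      rw [hq]; linarith
    have hle : ∀ t, 0 ≤ t → ∀ f : ℝ → ℝ, ∫⁻ x in Ioo α β, ‖Tm t f x‖ₑ ^ p ≤
        ∫⁻ u in Ioi t, V u * ‖E f u‖ₑ ^ p := by
      intro t ht f
      rw [key2 t ht f, ← shift_Ioi (fun u => V u * ‖E f u‖ₑ ^ p) t t, sub_self]
      apply setLIntegral_mono' measurableSet_Ioi
      intro u hu
      have hu' : (0:ℝ) < u := hu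
      gcongr
      simp only [hVdef]
      apply ENNReal.ofReal_le_ofReal
      exact Real.rpow_le_rpow_of_nonpos (hwpos _ (by linarith))
        (hwanti hu (show (0:ℝ) < u + t by linarith) (by linarith)) hq0
    constructor
    · intro f hf hfi
      have hfin := (integrableOn_iff_ne_top p hp f hf _).mp hfi
      rw [key0] at hfin
      have hEf := hEm f hf
      have ht := tail_tendsto (fun u => V u * ‖E f u‖ₑ ^ p) (by fun_prop) hfin
      have h1 : Tendsto (fun t => ∫⁻ x in Ioo α β, ‖Tm t f x‖ₑ ^ p) atTop (𝓝 0) := by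
        apply tendsto_of_tendsto_of_tendsto_of_le_of_le' tendsto_const_nhds ht
        · exact Eventually.of_forall fun t => zero_le
        · filter_upwards [eventually_ge_atTop 0] with t ht using hle t ht f
      have h2 := (ENNReal.tendsto_toReal ENNReal.zero_ne_top).comp h1
      rw [ENNReal.toReal_zero] at h2
      apply h2.congr'
      filter_upwards [eventually_ge_atTop 0] with t ht using (intT t ht f hf).symm
    · rintro ⟨f, hf, hfi, hd⟩
      have hfin := (integrableOn_iff_ne_top p hp f hf _).mp hfi
      set A := ∫⁻ x in Ioo α β, ‖f x‖ₑ ^ p with hAdef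
      set B : ℝ := 2 ^ p * (1 + A.toReal) with hB
      have hBpos : 0 < B := by positivity
      set C : ℝ := max 1 ((B + 1) / (β - α)) with hC
      have hC1 : 1 ≤ C := le_max_left _ _
      have hgm : Measurable (fun _ => C : ℝ → ℝ) := measurable_const
      have hN := hconst C (by linarith)
      obtain ⟨t, ht, hlt⟩ := hd (fun _ => C) hgm
        ((integrableOn_iff_ne_top p hp _ hgm _).mpr (by rw [hN]; simp)) 1 one_pos
      have hTA : ∫⁻ x in Ioo α β, ‖Tm t f x‖ₑ ^ p ≤ A := by
        refine (hle t ht f).trans ?_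
        rw [hAdef, key0]
        exact lintegral_mono_set (Ioi_subset_Ioi ht)
      rw [intTg t ht f _ hf hgm] at hlt
      have hTmt := hTmm t f hf
      have hfin2 : ∫⁻ x in Ioo α β, ‖Tm t f x - (fun _ => C : ℝ → ℝ) x‖ₑ ^ p ≠ ∞ := by
        have h3 := hsub (Tm t f) (fun _ => C) (fun _ => 0) hTmt hgm measurable_const
        refine ne_top_of_le_ne_top ?_ h3
        simp only [sub_zero, zero_sub, enorm_neg]
        refine ENNReal.mul_ne_top h2p (ENNReal.add_ne_top.mpr
          ⟨ne_top_of_le_ne_top hfin hTA, ?_⟩)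
        have := hN
        simp only at this
        rw [this]; exact ENNReal.ofReal_ne_top
      have h3 := hsub (fun _ => 0) (fun _ => C) (Tm t f) measurable_const hgm hTmt
      simp only [zero_sub, enorm_neg] at h3 hN hlt hfin2
      rw [hN] at h3
      have h4 : ENNReal.ofReal (C ^ p * (β - α)) ≤ ENNReal.ofReal B := by
        refine h3.trans ?_
        rw [hB, ENNReal.ofReal_mul (by positivity), ← h2pr, add_comm,
          ENNReal.ofReal_add (by norm_num) ENNReal.toReal_nonneg, ENNReal.ofReal_toReal hfin]
        gcongr
        rw [← ENNReal.ofReal_toReal hfin2]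
        exact ENNReal.ofReal_le_ofReal hlt.le
      rw [ENNReal.ofReal_le_ofReal_iff hBpos.le] at h4
      have h5 : C ≤ C ^ p := by
        simpa using Real.rpow_le_rpow_of_exponent_le hC1 hp
      have hba : 0 < β - α := by linarith
      have h6 : (B + 1) / (β - α) ≤ C := le_max_right _ _
      rw [div_le_iff₀ hba] at h6
      nlinarith
  have hBB : ¬ lam ≤ -(1 / p) → ¬ StableLp α β p h φ ∧ HypercyclicLp α β p h φ := by
    intro hl
    have hq0 : 0 < q := by
      have h1 := mul_lt_mul_of_pos_right (not_le.mp hl) hp0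
      have h2 : -(1 / p) * p = -1 := by field_simp
      rw [hq]; linarith
    have hVa : AntitoneOn V (Ioi 0) := by
      intro u hu u' hu' huu
      exact ENNReal.ofReal_le_ofReal
        (Real.rpow_le_rpow (hwpos u' hu').le (hwanti hu hu' huu) hq0.le)
    have hV0 : Tendsto V atTop (𝓝 0) := by
      have h1 := hw0.rpow_const (p := q) (Or.inr hq0.le)
      rw [Real.zero_rpow hq0.ne'] at h1
      simpa using ENNReal.tendsto_ofReal h1
    obtain ⟨k, hkm, hkf, hkd⟩ := translation_hyper p hp V hVm hVa hV0
    set f : ℝ → ℝ := fun x => w (G x) ^ lam * k (G x) with hf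
    have hfm : Measurable f := by simp only [hf]; fun_prop
    have hEf : ∀ u, 0 < u → E f u = k u := by
      intro u hu
      simp only [hE, hf, hGH u hu]
      rw [mul_left_comm, hback u hu]
    have hffin : ∫⁻ x in Ioo α β, ‖f x‖ₑ ^ p ≠ ∞ := by
      rw [key0]
      rw [setLIntegral_congr_fun (g := fun u => V u * ‖k u‖ₑ ^ p) measurableSet_Ioi
        (fun u hu => by simp only [hEf u hu])]
      exact hkf
    have hfi : IntegrableOn (fun x => |f x| ^ p) (Ioo α β) :=
      (integrableOn_iff_ne_top p hp f hfm _).mpr hffin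
    have core : ∀ g : ℝ → ℝ, Measurable g → IntegrableOn (fun x => |g x| ^ p) (Ioo α β) →
        ∀ ε : ℝ≥0∞, 0 < ε → ∀ T0 : ℝ, ∃ t, T0 ≤ t ∧ 0 ≤ t ∧
          ∫⁻ x in Ioo α β, ‖Tm t f x - g x‖ₑ ^ p < ε := by
      intro g hg hgi ε hε T0
      have hgfin := (integrableOn_iff_ne_top p hp g hg _).mp hgi
      rw [key0] at hgfin
      obtain ⟨t, h1, h2, h3⟩ := hkd (E g) (hEm g hg) hgfin ε hε T0
      refine ⟨t, h1, h2, ?_⟩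
      rw [key1 t h2]
      rwa [setLIntegral_congr_fun (g := fun u => V u * ‖k (u + t) - E g u‖ₑ ^ p) measurableSet_Ioi
        (fun u hu => by
          have hu' : (0:ℝ) < u := hu
          simp only [hEf (u + t) (by linarith)])]
    constructor
    · intro hs
      have h1 := hs f hfm hfi
      have hba : 0 < β - α := by linarith
      set η : ℝ := (β - α) / (2 ^ p * 4) with hη
      have hη0 : 0 < η := by positivity
      obtain ⟨T0, hT0⟩ := eventually_atTop.1 ((tendsto_order.1 h1).2 η hη0)
      have hgm : Measurable (fun _ => 1 : ℝ → ℝ) := measurable_const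
      have hN := hconst 1 zero_le_one
      obtain ⟨t, ht1, ht2, ht3⟩ := core (fun _ => 1) hgm
        ((integrableOn_iff_ne_top p hp _ hgm _).mpr (by rw [hN]; simp))
        (ENNReal.ofReal η) (ENNReal.ofReal_pos.mpr hη0) T0
      have h4 := hT0 t ht1
      rw [intT t ht2 f hfm] at h4
      have hTmt := hTmm t f hfm
      simp only [Real.one_rpow, one_mul] at hN
      have hfin : ∫⁻ x in Ioo α β, ‖Tm t f x‖ₑ ^ p ≠ ∞ := by
        have h5 := hsub (Tm t f) (fun _ => 0) (fun _ => 1) hTmt measurable_const hgm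
        simp only [sub_zero] at h5
        refine ne_top_of_le_ne_top ?_ h5
        exact ENNReal.mul_ne_top h2p (ENNReal.add_ne_top.mpr ⟨ht3.ne_top, by rw [hN]; simp⟩)
      have h6 := hsub (fun _ => 0) (fun _ => 1) (Tm t f) measurable_const hgm hTmt
      simp only [zero_sub, enorm_neg] at h6
      rw [hN] at h6
      have h7 : ENNReal.ofReal (β - α) ≤ ENNReal.ofReal (2 ^ p * (η + η)) := by
        refine h6.trans ?_
        rw [ENNReal.ofReal_mul (by positivity), ← h2pr, ENNReal.ofReal_add hη0.le hη0.le]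
        gcongr
        rw [← ENNReal.ofReal_toReal hfin]
        exact ENNReal.ofReal_le_ofReal h4.le
      rw [ENNReal.ofReal_le_ofReal_iff (by positivity)] at h7
      have h8 : (2:ℝ) ^ p * (η + η) = (β - α) / 2 := by
        rw [hη]; field_simp; ring
      linarith
    · refine ⟨f, hfm, hfi, fun g hg hgi ε hε => ?_⟩
      obtain ⟨t, _, ht2, ht3⟩ := core g hg hgi (ENNReal.ofReal ε) (ENNReal.ofReal_pos.mpr hε) 0
      refine ⟨t, ht2, ?_⟩
      rw [intTg t ht2 f g hfm hg]
      exact (ENNReal.lt_ofReal_iff_toReal_lt ht3.ne_top).mp ht3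
  by_cases hl : lam ≤ -(1 / p)
  · have := hA hl; tauto
  · have := hBB hl; tauto
end
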